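/- For every integer k ≥ 2 there exists a constant C_k < ∞ such that for every δ ∈ (0, 1], the Lebesgue measure of the set L_δ satisfies |L_δ| ≤ C_k · (log₊ δ)^{k−1} · δ^{−q_k}. -/

import Mathlib

open MeasureTheory Real Set
open scoped ENNReal

noncomputable section

/-- Index set for multi-indices `β = (β₁, β₂) ∈ ℕ²` with `1 ≤ β₁ + β₂ ≤ k`;
its cardinality is `N = (k+1)(k+2)/2 − 1`. -/
def Idx (k : ℕ) : Type :=
  {β : Fin (k + 1) × Fin (k + 1) // 1 ≤ (β.1 : ℕ) + (β.2 : ℕ) ∧ (β.1 : ℕ) + (β.2 : ℕ) ≤ k}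

instance (k : ℕ) : Fintype (Idx k) := by unfold Idx; infer_instance

/-- The phase polynomial `P(ξ; x) = ∑_{1 ≤ |β| ≤ k} x_β ξ₁^{β₁} ξ₂^{β₂}`. -/
def Pphase (k : ℕ) (x : Idx k → ℝ) (ξ : Fin 2 → ℝ) : ℝ :=
  ∑ β : Idx k, x β * ξ 0 ^ (β.1.1 : ℕ) * ξ 1 ^ (β.1.2 : ℕ)

/-- `E_k1(x) = ∫_{[0,1]²} e(P(ξ; x)) dξ` with `e(t) = exp(2πit)`. -/
def Eone (k : ℕ) (x : Idx k → ℝ) : ℂ :=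
  ∫ ξ in Icc (0 : Fin 2 → ℝ) 1, Complex.exp (2 * Real.pi * Complex.I * (Pphase k x ξ))

/-- `L_δ = {x ∈ ℝ^N : sup_{μ∈ℝ} |{ξ ∈ [0,1]² : μ ≤ P(ξ; x) ≤ μ + 1}| > δ}`. -/
def Lset (k : ℕ) (δ : ℝ) : Set (Idx k → ℝ) :=
  {x | ENNReal.ofReal δ <
    ⨆ μ : ℝ, volume {ξ ∈ Icc (0 : Fin 2 → ℝ) 1 |
      μ ≤ Pphase k x ξ ∧ Pphase k x ξ ≤ μ + 1}}

/-- A measurable set in `ℝ^ι` whose `i`-th coordinate is determined up to an error `len i` by the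
coordinates of smaller rank has volume at most `∏ i, len i`. -/
theorem volume_le_prod_of_triangular {ι : Type*} [Fintype ι] (f : ι → ℕ)
    (hf : Function.Injective f) (K : Set (ι → ℝ)) (hK : MeasurableSet K) (len : ι → ℝ)
    (h : ∀ x ∈ K, ∀ x' ∈ K, ∀ i, (∀ j, f j < f i → x j = x' j) → |x i - x' i| ≤ len i) :
    volume K ≤ ∏ i, ENNReal.ofReal (len i) := by
  classical
  have hmeas : Measurable (K.indicator (1 : (ι → ℝ) → ℝ≥0∞)) := measurable_one.indicator hK
  have key : ∀ s : Finset ι, (∀ a ∈ s, ∀ b ∉ s, f b < f a) → ∀ x,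
      (lmarginal (fun _ => volume) s (K.indicator (1 : (ι → ℝ) → ℝ≥0∞))) x ≤
        ∏ i ∈ s, ENNReal.ofReal (len i) := by
    intro s
    induction s using Finset.strongInduction with
    | H s ih =>
      intro hs x
      rcases s.eq_empty_or_nonempty with rfl | hne
      · rw [lmarginal_empty, Finset.prod_empty]
        exact indicator_le_self' (fun _ _ => zero_le) x
      · obtain ⟨i, his, hmin⟩ := s.exists_min_image f hne
        have hlt : ∀ j ∈ s.erase i, f i < f j := fun j hj =>
          lt_of_le_of_ne (hmin j (Finset.mem_of_mem_erase hj))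
            (fun e => Finset.ne_of_mem_erase hj (hf e).symm)
        have hs' : ∀ a ∈ s.erase i, ∀ b ∉ s.erase i, f b < f a := by
          intro a ha b hb
          by_cases hbi : b = i
          · exact hbi ▸ hlt a ha
          · exact hs a (Finset.mem_of_mem_erase ha) b
              (fun hbs => hb (Finset.mem_erase.2 ⟨hbi, hbs⟩))
        rw [lmarginal_erase _ hmeas his, ← Finset.mul_prod_erase s _ his]
        set A : Set ℝ := {a | ∃ z ∈ K, z i = a ∧ ∀ j ∉ s, z j = x j} with hA
        have hvol : volume A ≤ ENNReal.ofReal (len i) := by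
          refine (Real.volume_le_diam A).trans (Metric.ediam_le ?_)
          rintro a ⟨z, hz, rfl, hzx⟩ b ⟨z', hz', rfl, hzx'⟩
          rw [edist_dist, Real.dist_eq]
          refine ENNReal.ofReal_le_ofReal (h z hz z' hz' i fun j hj => ?_)
          have hjs : j ∉ s := fun hjs => absurd (hmin j hjs) (not_le.2 hj)
          rw [hzx j hjs, hzx' j hjs]
        set c := ∏ j ∈ s.erase i, ENNReal.ofReal (len j) with hc
        calc ∫⁻ a, (lmarginal (fun _ => volume) (s.erase i)
                (K.indicator (1 : (ι → ℝ) → ℝ≥0∞))) (Function.update x i a)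
            ≤ ∫⁻ a, (toMeasurable volume A).indicator (fun _ => c) a := by
              refine lintegral_mono fun a => ?_
              by_cases ha : a ∈ toMeasurable volume A
              · rw [indicator_of_mem ha]
                exact ih _ (Finset.erase_ssubset his) hs' _
              · rw [indicator_of_notMem ha]
                refine le_of_eq ?_
                unfold lmarginal
                refine (lintegral_congr fun y => ?_).trans lintegral_zero
                refine indicator_of_notMem (fun hy => ha (subset_toMeasurable _ _ ?_)) _
                refine ⟨_, hy, ?_, fun j hj => ?_⟩
                · simp [Function.updateFinset]
                · have hji : j ≠ i := fun e => hj (e ▸ his)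
                  simp [Function.updateFinset, hj, hji]
          _ = c * volume A := by
              rw [lintegral_indicator (measurableSet_toMeasurable _ _), lintegral_const,
                Measure.restrict_apply_univ, measure_toMeasurable]
          _ ≤ ENNReal.ofReal (len i) * c := by rw [mul_comm]; gcongr
  have := key Finset.univ (fun a _ b hb => absurd (Finset.mem_univ b) hb) 0
  rw [lmarginal_univ] at this
  calc volume K = ∫⁻ x, K.indicator (1 : (ι → ℝ) → ℝ≥0∞) x := (lintegral_indicator_one hK).symm
    _ ≤ _ := this

/-- Iterated integration of a product whose `i`-th factor depends only on the coordinates `j ≥ i`. -/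
theorem lintegral_prod_le_of_triangular {ι α : Type*} [Fintype ι] [LinearOrder ι] [MeasureSpace α]
    [SigmaFinite (volume : Measure α)] [Inhabited α] (g : ι → (ι → α) → ℝ≥0∞) (B : ι → ℝ≥0∞)
    (hg : ∀ i, Measurable (g i))
    (hdep : ∀ i x y, (∀ j, i ≤ j → x j = y j) → g i x = g i y)
    (hB : ∀ i x, ∫⁻ a, g i (Function.update x i a) ≤ B i) :
    ∫⁻ x, ∏ i, g i x ≤ ∏ i, B i := by
  have key : ∀ s : Finset ι, (∀ a ∈ s, ∀ b, b < a → b ∈ s) → ∀ x,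
      (lmarginal (fun _ => volume) s (fun x => ∏ i ∈ s, g i x)) x ≤ ∏ i ∈ s, B i := by
    intro s
    induction s using Finset.induction_on_max with
    | empty => intro _ x; simp
    | insert i s hi ih =>
      intro hs x
      have his : i ∉ s := fun h => lt_irrefl _ (hi i h)
      have hs' : ∀ a ∈ s, ∀ b, b < a → b ∈ s := fun a ha b hb =>
        Finset.mem_of_mem_insert_of_ne (hs a (Finset.mem_insert_of_mem ha) b hb)
          (fun e => lt_asymm hb (e ▸ hi a ha))
      have hm : Measurable fun x => ∏ i ∈ s, g i x :=
        Finset.measurable_prod s fun i _ => hg i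
      have hm' : Measurable fun x => ∏ j ∈ insert i s, g j x :=
        Finset.measurable_prod _ fun i _ => hg i
      rw [lmarginal_insert _ hm' his, Finset.prod_insert his]
      calc _ ≤ ∫⁻ a, g i (Function.update x i a) * ∏ j ∈ s, B j := by
            refine lintegral_mono fun a => ?_
            refine le_trans (le_of_eq ?_) (mul_le_mul_right (ih hs' (Function.update x i a)) _)
            unfold lmarginal
            refine Eq.trans (lintegral_congr fun y => ?_)
              (lintegral_const_mul _ (hm.comp measurable_updateFinset))
            dsimp only
            rw [Finset.prod_insert his]
            congr 1
            refine hdep i _ _ fun j hj => ?_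
            have : j ∉ s := fun h => absurd (hi j h) (not_lt.2 hj)
            simp [Function.updateFinset, this]
        _ = (∫⁻ a, g i (Function.update x i a)) * ∏ j ∈ s, B j :=
            lintegral_mul_const _ ((hg i).comp (measurable_update x))
        _ ≤ _ := by gcongr; exact hB i x
  have := key Finset.univ (fun a _ b _ => Finset.mem_univ b) (fun _ => default)
  rwa [lmarginal_univ] at this

/-- The coefficients of a polynomial of degree at most `k` are bounded in terms of its values at
`0, …, k`. -/
theorem exists_coeff_bound (k : ℕ) : ∃ C : ℝ, 1 ≤ C ∧ ∀ p : Polynomial ℝ, p.natDegree ≤ k →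
    (∀ i : ℕ, i ≤ k → |p.eval (i : ℝ)| ≤ 1) → ∀ j, |p.coeff j| ≤ C := by
  set V : Matrix (Fin (k + 1)) (Fin (k + 1)) ℝ :=
    Matrix.vandermonde fun i => ((i : ℕ) : ℝ) with hV
  have hdet : IsUnit V.det := by
    rw [isUnit_iff_ne_zero, hV, Matrix.det_vandermonde_ne_zero_iff]
    intro a b hab
    exact Fin.ext (Nat.cast_injective (R := ℝ) hab)
  refine ⟨1 + ∑ j, ∑ i, |V⁻¹ j i|, le_add_of_nonneg_right (by positivity), fun p hp h j => ?_⟩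
  have hnn : 0 ≤ ∑ j, ∑ i, |V⁻¹ j i| := by positivity
  by_cases hj : k < j
  · rw [Polynomial.coeff_eq_zero_of_natDegree_lt (by omega), abs_zero]
    linarith
  set c : Fin (k + 1) → ℝ := fun j => p.coeff j with hc
  have hVc : V.mulVec c = fun i : Fin (k + 1) => p.eval ((i : ℕ) : ℝ) := by
    ext i
    rw [Polynomial.eval_eq_sum_range' (n := k + 1) (by omega), Finset.sum_range]
    simp [Matrix.mulVec, dotProduct, hV, Matrix.vandermonde, hc, mul_comm]
  have hcV : c = V⁻¹.mulVec fun i : Fin (k + 1) => p.eval ((i : ℕ) : ℝ) := by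
    rw [← hVc, Matrix.mulVec_mulVec, Matrix.nonsing_inv_mul _ hdet, Matrix.one_mulVec]
  have hj' : j < k + 1 := by omega
  have : p.coeff j = ∑ i, V⁻¹ ⟨j, hj'⟩ i * p.eval ((i : ℕ) : ℝ) := congrFun hcV ⟨j, hj'⟩
  rw [this]
  calc _ ≤ ∑ i, |V⁻¹ ⟨j, hj'⟩ i * p.eval ((i : ℕ) : ℝ)| := Finset.abs_sum_le_sum_abs _ _
    _ ≤ ∑ i, |V⁻¹ ⟨j, hj'⟩ i| := by
        refine Finset.sum_le_sum fun i _ => ?_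
        rw [abs_mul]
        exact mul_le_of_le_one_right (abs_nonneg _) (h i (by omega))
    _ ≤ ∑ j, ∑ i, |V⁻¹ j i| :=
        Finset.single_le_sum (f := fun j => ∑ i, |V⁻¹ j i|) (fun _ _ => by positivity)
          (Finset.mem_univ _)
    _ ≤ _ := by linarith

/-- If a real polynomial takes values in `[μ, μ + 1]` at `y`, then this persists on every interval
around `y` free of the roots of `p - μ` and `p - (μ + 1)`. -/
theorem mem_Icc_of_forall_root {p : Polynomial ℝ} {μ y H : ℝ} (hy : p.eval y ∈ Icc μ (μ + 1))
    (h0 : ∀ ρ ∈ (p - Polynomial.C μ).roots, H < |y - ρ|)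
    (h1 : ∀ ρ ∈ (p - Polynomial.C (μ + 1)).roots, H < |y - ρ|) {z : ℝ} (hz : |z - y| ≤ H) :
    p.eval z ∈ Icc μ (μ + 1) := by
  have aux : ∀ ν : ℝ, p.eval z ≠ ν → ν ∈ uIcc (p.eval y) (p.eval z) →
      ∃ ρ ∈ (p - Polynomial.C ν).roots, |y - ρ| ≤ H := by
    intro ν hν hmem
    obtain ⟨ρ, hρ, hρν⟩ := intermediate_value_uIcc (p.continuous.continuousOn) hmem
    refine ⟨ρ, ?_, ?_⟩
    · rw [Polynomial.mem_roots]
      · simp [hρν]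
      · intro h
        apply hν
        have := congrArg (Polynomial.eval z) h
        simpa [sub_eq_zero] using this
    · rw [abs_sub_comm]
      refine (abs_sub_left_of_mem_uIcc hρ).trans hz
  by_contra hcon
  rw [mem_Icc, not_and_or, not_le, not_le] at hcon
  rcases hcon with hcon | hcon
  · obtain ⟨ρ, hρ, hle⟩ := aux μ hcon.ne (by rw [mem_uIcc]; right; exact ⟨hcon.le, hy.1⟩)
    exact absurd (h0 ρ hρ) (not_lt.2 hle)
  · obtain ⟨ρ, hρ, hle⟩ := aux (μ + 1) hcon.ne' (by rw [mem_uIcc]; left; exact ⟨hy.2, hcon.le⟩)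
    exact absurd (h1 ρ hρ) (not_lt.2 hle)

/-- On at least half of a sublevel set of measure `w`, the derivatives of a polynomial obey
Markov-type bounds at scale `w`. -/
theorem exists_hasseDeriv_bound (k : ℕ) (hk : 1 ≤ k) : ∃ C : ℝ, 1 ≤ C ∧ ∀ p : Polynomial ℝ,
    p.natDegree ≤ k → ∀ μ w : ℝ, 0 < w → ∀ S : Set ℝ, (∀ y ∈ S, p.eval y ∈ Icc μ (μ + 1)) →
    ENNReal.ofReal w ≤ volume S →
    ENNReal.ofReal (w / 2) ≤ volume {y ∈ S | ∀ j, 1 ≤ j →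
      |(Polynomial.hasseDeriv j p).eval y| ≤ (C / w) ^ j} := by
  obtain ⟨C, hC1, hC⟩ := exists_coeff_bound k
  have hk0 : (1 : ℝ) ≤ k := by exact_mod_cast hk
  refine ⟨8 * k ^ 2 * C, by nlinarith, fun p hp μ w hw S hS hwS => ?_⟩
  set H : ℝ := w / (8 * k) with hH
  have hHpos : 0 < H := by positivity
  set R : Finset ℝ := (p - Polynomial.C μ).roots.toFinset ∪
    (p - Polynomial.C (μ + 1)).roots.toFinset with hR
  have hdeg : ∀ ν : ℝ, (p - Polynomial.C ν).roots.toFinset.card ≤ k := fun ν =>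
    (Multiset.toFinset_card_le _).trans <| (Polynomial.card_roots' _).trans <| by
      rwa [Polynomial.natDegree_sub_C]
  have hcard : R.card ≤ 2 * k := by
    refine (Finset.card_union_le _ _).trans ?_
    have h1 := hdeg μ
    have h2 := hdeg (μ + 1)
    omega
  set bad : Set ℝ := ⋃ ρ ∈ R, Icc (ρ - H) (ρ + H) with hbad
  have hvbad : volume bad ≤ ENNReal.ofReal (w / 2) := by
    calc volume bad ≤ ∑ ρ ∈ R, volume (Icc (ρ - H) (ρ + H)) := measure_biUnion_finset_le _ _
      _ = ∑ ρ ∈ R, ENNReal.ofReal (2 * H) := by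
          refine Finset.sum_congr rfl fun ρ _ => ?_
          rw [Real.volume_Icc]; congr 1; ring
      _ = ENNReal.ofReal (R.card * (2 * H)) := by
          rw [Finset.sum_const, nsmul_eq_mul, ENNReal.ofReal_mul (p := (R.card : ℝ)) (by positivity),
            ENNReal.ofReal_natCast]
      _ ≤ _ := by
          refine ENNReal.ofReal_le_ofReal ?_
          have : (R.card : ℝ) ≤ 2 * k := by exact_mod_cast hcard
          calc (R.card : ℝ) * (2 * H) ≤ 2 * k * (2 * H) := by gcongr
            _ = w / 2 := by rw [hH]; field_simp; norm_num
  have hsub : S \ bad ⊆ {y ∈ S | ∀ j, 1 ≤ j →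
      |(Polynomial.hasseDeriv j p).eval y| ≤ (8 * k ^ 2 * C / w) ^ j} := by
    rintro y ⟨hyS, hyb⟩
    refine ⟨hyS, fun j hj => ?_⟩
    have hfar : ∀ ρ ∈ R, H < |y - ρ| := by
      intro ρ hρ
      by_contra hcon
      rw [not_lt, abs_le] at hcon
      exact hyb (mem_biUnion hρ ⟨by linarith, by linarith⟩)
    have hmem : ∀ z, |z - y| ≤ H → p.eval z ∈ Icc μ (μ + 1) := fun z hz =>
      mem_Icc_of_forall_root (hS y hyS)
        (fun ρ hρ => hfar ρ (by rw [hR]; simp only [Finset.mem_union, Multiset.mem_toFinset]; tauto))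
        (fun ρ hρ => hfar ρ (by rw [hR]; simp only [Finset.mem_union, Multiset.mem_toFinset]; tauto))
        hz
    set q : Polynomial ℝ :=
      ((Polynomial.taylor y p - Polynomial.C (p.eval y)).comp (Polynomial.C (H / k) * Polynomial.X))
      with hq
    have hqdeg : q.natDegree ≤ k := by
      refine Polynomial.natDegree_comp_le.trans ?_
      rw [Polynomial.natDegree_sub_C, Polynomial.natDegree_taylor]
      calc _ ≤ p.natDegree * 1 := by
            gcongr
            exact (Polynomial.natDegree_C_mul_le _ _).trans Polynomial.natDegree_X_le
        _ ≤ k := by omega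
    have hqe : ∀ i : ℕ, i ≤ k → |q.eval (i : ℝ)| ≤ 1 := by
      intro i hi
      have hi' : (i : ℝ) ≤ k := by exact_mod_cast hi
      have : q.eval (i : ℝ) = p.eval (H / k * i + y) - p.eval y := by
        simp [hq, Polynomial.taylor_eval]
      rw [this]
      have h1 := hmem (H / k * i + y) (by
        rw [add_sub_cancel_right, abs_of_nonneg (by positivity)]
        calc H / k * i ≤ H / k * k := by gcongr
          _ = H := by field_simp)
      have h2 := hS y hyS
      rw [abs_le]
      constructor <;> linarith [h1.1, h1.2, h2.1, h2.2]
    have hcj := hC q hqdeg hqe j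
    have hqj : q.coeff j = (Polynomial.hasseDeriv j p).eval y * (H / k) ^ j := by
      rw [hq, Polynomial.comp_C_mul_X_coeff, Polynomial.coeff_sub, Polynomial.coeff_C,
        if_neg (by omega), sub_zero, Polynomial.taylor_coeff]
    rw [hqj, abs_mul, abs_of_nonneg (by positivity : (0 : ℝ) ≤ (H / k) ^ j)] at hcj
    have hpos : 0 < (H / k) ^ j := by positivity
    calc |(Polynomial.hasseDeriv j p).eval y| ≤ C / (H / k) ^ j := by rwa [le_div_iff₀ hpos]
      _ ≤ C ^ j / (H / k) ^ j := by gcongr; exact le_self_pow₀ hC1 (by omega)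
      _ = _ := by
        rw [← div_pow, hH]
        congr 1
        field_simp
  refine le_trans ?_ (measure_mono hsub)
  refine le_trans ?_ (le_measure_sdiff)
  calc ENNReal.ofReal (w / 2) = ENNReal.ofReal w - ENNReal.ofReal (w / 2) := by
        rw [← ENNReal.ofReal_sub _ (by positivity)]; congr 1; ring
    _ ≤ _ := tsub_le_tsub hwS hvbad

/-- The integral of `(1 + W |u|)⁻¹` over `[-1, 1]`. -/
theorem lintegral_inv_one_add_le {W : ℝ} (hW : 0 < W) :
    ∫⁻ u : ℝ, (Icc (-1 : ℝ) 1).indicator (fun u => ENNReal.ofReal (1 + W * |u|)⁻¹) u ≤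
      ENNReal.ofReal (2 * Real.log (1 + W) / W) := by
  have hcont : Continuous fun u : ℝ => (1 + W * |u|)⁻¹ :=
    Continuous.inv₀ (by fun_prop) fun u => by positivity
  have hhalf : ∫ u in (0 : ℝ)..1, (1 + W * |u|)⁻¹ = Real.log (1 + W) / W := by
    have : ∀ u ∈ uIcc (0 : ℝ) 1,
        HasDerivAt (fun u => Real.log (1 + W * u) / W) ((1 + W * |u|)⁻¹) u := by
      intro u hu
      rw [uIcc_of_le zero_le_one] at hu
      have hpos : 0 < 1 + W * u := by have := hu.1; positivity
      have h := (((hasDerivAt_id u).const_mul W).const_add 1).log hpos.ne'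
      have hval : (1 + W * |u|)⁻¹ = W * 1 / (1 + W * id u) / W := by
        rw [abs_of_nonneg hu.1]
        simp only [id]
        field_simp
      rw [hval]
      exact h.div_const W
    rw [intervalIntegral.integral_eq_sub_of_hasDerivAt this (hcont.intervalIntegrable _ _)]
    simp
  have hneg : ∫ u in (-1 : ℝ)..0, (1 + W * |u|)⁻¹ = Real.log (1 + W) / W := by
    rw [← hhalf]
    have := intervalIntegral.integral_comp_neg (a := 0) (b := 1) fun u : ℝ => (1 + W * |u|)⁻¹
    simpa using this.symm
  rw [lintegral_indicator measurableSet_Icc,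
    ← ofReal_integral_eq_lintegral_ofReal (hcont.integrableOn_Icc)
      (Filter.Eventually.of_forall fun u => by positivity),
    integral_Icc_eq_integral_Ioc, ← intervalIntegral.integral_of_le (by norm_num),
    ← intervalIntegral.integral_add_adjacent_intervals (b := 0) (hcont.intervalIntegrable _ _)
      (hcont.intervalIntegrable _ _), hhalf, hneg]
  refine ENNReal.ofReal_le_ofReal (le_of_eq ?_)
  ring

/-- Local integrability of `|u|⁻ᵉ` for `e < 1`. -/
theorem lintegral_abs_rpow_lt_top {e : ℝ} (he : e < 1) :
    ∫⁻ u : ℝ, (Icc (-1 : ℝ) 1).indicator (fun u => ENNReal.ofReal (|u| ^ (-e))) u < ∞ := by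
  have h1 : IntegrableOn (fun u : ℝ => |u| ^ (-e)) (Ioc 0 1) := by
    have := (intervalIntegral.intervalIntegrable_rpow' (a := 0) (b := 1) (r := -e)
      (by linarith)).1
    refine this.congr_fun (fun u hu => ?_) measurableSet_Ioc
    simp only [abs_of_pos hu.1]
  have h2 : IntegrableOn (fun u : ℝ => |u| ^ (-e)) (Ico (-1) 0) := by
    rw [← integrableOn_Icc_iff_integrableOn_Ioc] at h1
    have := h1.comp_neg
    simp only [abs_neg] at this
    refine this.mono_set fun u hu => ?_
    simp only [Set.mem_neg, mem_Icc]
    exact ⟨by linarith [hu.2], by linarith [hu.1]⟩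
  have h3 : IntegrableOn (fun u : ℝ => |u| ^ (-e)) (Icc (-1) 1) := by
    have h4 := h2.union h1
    refine (h4.union (integrableOn_singleton (x := (0 : ℝ))
      (hx := measure_singleton_lt_top))).mono_set fun u hu => ?_
    rcases lt_trichotomy u 0 with h | h | h
    · exact Or.inl (Or.inl ⟨hu.1, h⟩)
    · exact Or.inr h
    · exact Or.inl (Or.inr ⟨h, hu.2⟩)
  rw [lintegral_indicator measurableSet_Icc]
  refine lt_of_le_of_lt (lintegral_mono fun u => ?_) h3.2
  rw [← ofReal_norm]
  exact ENNReal.ofReal_le_ofReal (le_abs_self _)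

/-- A set of reals of measure at least `v` contains `n` ordered blocks of measure at least
`v / (2 n)` which are separated by gaps of length at least `v / (2 n)`. -/
theorem exists_separated_blocks {T : Set ℝ} (hT : MeasurableSet T) (hT01 : T ⊆ Icc 0 1) {v : ℝ}
    (hv : 0 < v) (hvT : ENNReal.ofReal v ≤ volume T) (n : ℕ) :
    ∃ B : ℕ → Set ℝ, (∀ i, B i ⊆ T) ∧ (∀ i, MeasurableSet (B i)) ∧
      (∀ i, i < n → ENNReal.ofReal (v / (2 * n)) ≤ volume (B i)) ∧
      ∀ i j, i < j → j < n → ∀ s ∈ B i, ∀ t ∈ B j, s + v / (2 * n) ≤ t := by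
  have hfin : volume T ≠ ∞ := ((measure_mono hT01).trans_lt (by simp)).ne
  set F : ℝ → ℝ := fun s => volume.real (T ∩ Iic s) with hF
  have hfin' : ∀ U : Set ℝ, volume (T ∩ U) ≠ ∞ := fun U => measure_ne_top_of_subset
    inter_subset_left hfin
  have hdiff : ∀ s s', s ≤ s' → F s' - F s = volume.real (T ∩ Ioc s s') := by
    intro s s' h
    have : T ∩ Iic s' = (T ∩ Iic s) ∪ (T ∩ Ioc s s') := by
      rw [← inter_union_distrib_left, Iic_union_Ioc_eq_Iic h]
    rw [hF]
    simp only
    rw [this, measureReal_union _ (hT.inter measurableSet_Ioc) (hfin' _) (hfin' _)]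
    · ring
    · exact Disjoint.mono inter_subset_right inter_subset_right
        (Set.disjoint_left.2 fun x hx hx' => absurd hx'.1 (not_lt.2 hx))
  have hmono : Monotone F := fun s s' h => by
    have := hdiff s s' h
    have h0 : 0 ≤ volume.real (T ∩ Ioc s s') := measureReal_nonneg
    linarith
  have hle : ∀ s s', s ≤ s' → volume.real (T ∩ Ioc s s') ≤ s' - s := by
    intro s s' h
    calc volume.real (T ∩ Ioc s s') ≤ volume.real (Ioc s s') :=
          measureReal_mono inter_subset_right (by simp)
      _ = s' - s := by rw [Real.volume_real_Ioc_of_le h]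
  have hcont : Continuous F := by
    refine LipschitzWith.continuous (K := 1) (LipschitzWith.of_le_add fun s s' => ?_)
    rcases le_total s s' with h | h
    · have := hmono h
      have := dist_nonneg (x := s) (y := s')
      linarith
    · have h1 := hdiff s' s h
      have h2 := hle s' s h
      rw [Real.dist_eq, abs_of_nonneg (by linarith)]
      linarith
  have hF0 : F 0 = 0 := by
    rw [hF]
    simp only
    rw [measureReal_def, measure_mono_null (t := {0}), ENNReal.toReal_zero]
    · intro x hx; exact le_antisymm hx.2 (hT01 hx.1).1
    · simp
  have hF1 : F 1 = volume.real T := by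
    rw [hF]; simp only; congr 1
    exact inter_eq_left.2 fun x hx => (hT01 hx).2
  have hvF : v ≤ F 1 := by
    rw [hF1, measureReal_def]
    exact (ENNReal.ofReal_le_iff_le_toReal hfin).1 hvT
  have hq : ∀ j : ℕ, ∃ s, j ≤ 2 * n → F s = j * (v / (2 * n)) := by
    intro j
    by_cases hj : j ≤ 2 * n
    · have hmem : (j : ℝ) * (v / (2 * n)) ∈ Icc (F 0) (F 1) := by
        rw [hF0]
        refine ⟨by positivity, ?_⟩
        rcases Nat.eq_zero_or_pos n with rfl | hn
        · simp; linarith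
        · have : (j : ℝ) ≤ 2 * n := by exact_mod_cast hj
          have hn' : (0 : ℝ) < n := by exact_mod_cast hn
          calc (j : ℝ) * (v / (2 * n)) ≤ 2 * n * (v / (2 * n)) := by gcongr
            _ = v := by field_simp
            _ ≤ _ := hvF
      obtain ⟨s, -, hs⟩ := intermediate_value_Icc zero_le_one hcont.continuousOn hmem
      exact ⟨s, fun _ => hs⟩
    · exact ⟨0, fun h => absurd h hj⟩
  choose s hs using hq
  refine ⟨fun i => T ∩ Ioc (s (2 * i)) (s (2 * i + 1)), fun i => inter_subset_left,
    fun i => hT.inter measurableSet_Ioc, fun i hi => ?_, fun i j hij hj a ha b hb => ?_⟩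
  · have h1 := hs (2 * i) (by omega)
    have h2 := hs (2 * i + 1) (by omega)
    push_cast at h1 h2
    have hpos : 0 < v / (2 * n) := by
      have : (0 : ℝ) < n := by exact_mod_cast (by omega : 0 < n)
      positivity
    have hlt : s (2 * i) < s (2 * i + 1) := hmono.reflect_lt (by rw [h1, h2]; nlinarith)
    have := hdiff _ _ hlt.le
    rw [ENNReal.ofReal_le_iff_le_toReal (hfin' _), ← measureReal_def, ← this, h1, h2]
    linarith
  · have h1 := hs (2 * i + 1) (by omega)
    have h2 := hs (2 * j) (by omega)
    push_cast at h1 h2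
    have hn : (0 : ℝ) < n := by exact_mod_cast (by omega : 0 < n)
    have hpos : 0 < v / (2 * n) := by positivity
    have hij' : (i : ℝ) + 1 ≤ j := by exact_mod_cast hij
    have hlt : s (2 * i + 1) < s (2 * j) := hmono.reflect_lt (by rw [h1, h2]; nlinarith)
    have h3 := hdiff _ _ hlt.le
    have h4 := hle _ _ hlt.le
    have h5 := ha.2.2
    have h6 := hb.2.1
    have h7 : v / (2 * n) ≤ F (s (2 * j)) - F (s (2 * i + 1)) := by rw [h1, h2]; nlinarith
    linarith

theorem sum_dyadic_rpow_le {δ γ : ℝ} (hδ : 0 < δ) (hγ : 0 < γ) {m : ℕ} (hm : δ * 2 ^ m ≤ 4) :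
    ∑ n ∈ Finset.range (m + 1), (δ * 2 ^ n) ^ γ ≤ 4 ^ γ / (1 - (1 / 2 : ℝ) ^ γ) := by
  set q : ℝ := (1 / 2 : ℝ) ^ γ with hq
  have hq0 : 0 ≤ q := by positivity
  have hq1 : q < 1 := Real.rpow_lt_one (by norm_num) (by norm_num) hγ
  rw [← Finset.sum_range_reflect]
  calc _ ≤ ∑ j ∈ Finset.range (m + 1), 4 ^ γ * q ^ j := by
        refine Finset.sum_le_sum fun j hj => ?_
        have hj' : j ≤ m := by rw [Finset.mem_range] at hj; omega
        have h1 : δ * 2 ^ (m + 1 - 1 - j) = (δ * 2 ^ m) * (1 / 2) ^ j := by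
          obtain ⟨i, rfl⟩ := Nat.exists_eq_add_of_le hj'
          rw [show j + i + 1 - 1 - j = i by omega, pow_add, one_div, inv_pow]
          field_simp
        rw [h1, Real.mul_rpow (by positivity) (by positivity), hq,
          ← Real.rpow_natCast ((1 / 2 : ℝ) ^ γ), ← Real.rpow_mul (by positivity), mul_comm γ,
          Real.rpow_mul (by positivity), Real.rpow_natCast]
        gcongr
    _ = 4 ^ γ * ∑ j ∈ Finset.range (m + 1), q ^ j := by rw [Finset.mul_sum]
    _ ≤ 4 ^ γ * (1 - q)⁻¹ := by
        gcongr
        rw [← tsum_geometric_of_lt_one hq0 hq1]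
        exact (summable_geometric_of_lt_one hq0 hq1).sum_le_tsum _ (fun _ _ => by positivity)
    _ = _ := by rw [div_eq_mul_inv]

/-- A dyadic pigeonhole principle: a function of mean larger than `δ` exceeds some dyadic level on
a set of nearly proportional measure. -/
theorem exists_dyadic_level {ε : ℝ} (hε : 0 < ε) : ∃ c : ℝ, 0 < c ∧
    ∀ (f : ℝ → ℝ≥0∞), Measurable f → (∀ t, f t ≤ 1) → ∀ δ : ℝ, 0 < δ →
    ENNReal.ofReal δ < ∫⁻ t in Icc (0 : ℝ) 1, f t → ∀ m : ℕ, (1 / 2 : ℝ) ^ m ≤ δ / 2 →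
    δ * 2 ^ m ≤ 4 → ∃ n, n ≤ m ∧ ENNReal.ofReal (c * (δ * 2 ^ n) ^ (1 + ε)) ≤
      volume {t ∈ Icc (0 : ℝ) 1 | ENNReal.ofReal ((1 / 2) ^ n) ≤ f t} := by
  set A : ℝ := 4 ^ ε / (1 - (1 / 2 : ℝ) ^ ε) with hA
  have hA0 : 0 < A := by
    have : (1 / 2 : ℝ) ^ ε < 1 := Real.rpow_lt_one (by norm_num) (by norm_num) hε
    have : 0 < 1 - (1 / 2 : ℝ) ^ ε := by linarith
    positivity
  refine ⟨1 / (4 * A), by positivity, fun f hf hf1 δ hδ hmean m hm1 hm2 => ?_⟩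
  by_contra! hcon
  set E : ℕ → Set ℝ := fun n => {t | ENNReal.ofReal ((1 / 2) ^ n) ≤ f t} with hE
  have hEm : ∀ n, MeasurableSet (E n) := fun n => measurableSet_le measurable_const hf
  have hpt : ∀ t, f t ≤ ENNReal.ofReal (δ / 2) + ∑ n ∈ Finset.range (m + 1),
      (E n).indicator (fun _ => ENNReal.ofReal (2 * (1 / 2) ^ n)) t := by
    intro t
    by_cases ht : ∃ n, t ∈ E n ∧ n ≤ m
    · classical
      set n := Nat.find ht with hn
      obtain ⟨hn1, hn2⟩ := Nat.find_spec ht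
      refine le_add_left (le_trans ?_ (Finset.single_le_sum
        (f := fun n => (E n).indicator (fun _ => ENNReal.ofReal (2 * (1 / 2) ^ n)) t)
        (fun _ _ => zero_le) (Finset.mem_range.2 (Nat.lt_succ_of_le hn2))))
      rw [indicator_of_mem hn1, ← hn]
      rcases Nat.eq_zero_or_pos n with h0 | hpos
      · rw [h0]
        refine (hf1 t).trans ?_
        simp
      · have hmin := Nat.find_min ht (m := n - 1) (by omega)
        have hlt : f t < ENNReal.ofReal ((1 / 2) ^ (n - 1)) := by
          by_contra hge
          exact hmin ⟨not_lt.1 hge, by omega⟩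
        refine hlt.le.trans (ENNReal.ofReal_le_ofReal (le_of_eq ?_))
        obtain ⟨l, hl⟩ := Nat.exists_eq_add_of_lt hpos
        rw [hl]
        simp [pow_succ]
        ring
    · have : f t < ENNReal.ofReal ((1 / 2) ^ m) := by
        by_contra hge
        exact ht ⟨m, not_lt.1 hge, le_rfl⟩
      exact le_add_right (this.le.trans (ENNReal.ofReal_le_ofReal hm1))
  have hle : ∫⁻ t in Icc (0 : ℝ) 1, f t ≤ ENNReal.ofReal δ := by
    calc ∫⁻ t in Icc (0 : ℝ) 1, f t ≤ ∫⁻ t in Icc (0 : ℝ) 1, (ENNReal.ofReal (δ / 2) +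
          ∑ n ∈ Finset.range (m + 1),
            (E n).indicator (fun _ => ENNReal.ofReal (2 * (1 / 2) ^ n)) t) := lintegral_mono hpt
      _ = ENNReal.ofReal (δ / 2) + ∑ n ∈ Finset.range (m + 1),
          ENNReal.ofReal (2 * (1 / 2) ^ n) * volume (Icc (0 : ℝ) 1 ∩ E n) := by
          rw [lintegral_add_left measurable_const, lintegral_finsetSum _
            (fun n _ => measurable_const.indicator (hEm n))]
          congr 1
          · simp
          · refine Finset.sum_congr rfl fun n _ => ?_
            rw [lintegral_indicator_const (hEm n), Measure.restrict_apply (hEm n), inter_comm]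
      _ ≤ ENNReal.ofReal (δ / 2) + ∑ n ∈ Finset.range (m + 1),
          ENNReal.ofReal (2 * (1 / 2) ^ n) *
            ENNReal.ofReal (1 / (4 * A) * (δ * 2 ^ n) ^ (1 + ε)) := by
          gcongr with n hn
          exact (hcon n (by rw [Finset.mem_range] at hn; omega)).le
      _ = ENNReal.ofReal (δ / 2 + ∑ n ∈ Finset.range (m + 1),
          2 * (1 / 2) ^ n * (1 / (4 * A) * (δ * 2 ^ n) ^ (1 + ε))) := by
          rw [ENNReal.ofReal_add (by positivity) (by positivity),
            ENNReal.ofReal_sum_of_nonneg (fun _ _ => by positivity)]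
          congr 1
          refine Finset.sum_congr rfl fun n _ => ?_
          rw [ENNReal.ofReal_mul (p := 2 * (1 / 2) ^ n) (by positivity)]
      _ ≤ ENNReal.ofReal δ := by
          refine ENNReal.ofReal_le_ofReal ?_
          have : ∀ n : ℕ, 2 * (1 / 2 : ℝ) ^ n * (1 / (4 * A) * (δ * 2 ^ n) ^ (1 + ε)) =
              δ / (2 * A) * (δ * 2 ^ n) ^ ε := by
            intro n
            rw [Real.rpow_add (by positivity), Real.rpow_one, one_div, inv_pow]
            field_simp
            norm_num
          simp_rw [this]
          rw [← Finset.mul_sum]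
          have h := sum_dyadic_rpow_le hδ hε hm2
          rw [← hA] at h
          calc δ / 2 + δ / (2 * A) * _ ≤ δ / 2 + δ / (2 * A) * A := by gcongr
            _ = δ := by field_simp; norm_num
  exact absurd hmean (not_lt.2 hle)

instance (k : ℕ) : DecidableEq (Idx k) := by unfold Idx; infer_instance

theorem Idx.prod_eq {M : Type*} [CommMonoid M] (k : ℕ) (F : ℕ → ℕ → M) :
    ∏ β : Idx k, F β.1.1 β.1.2 = ∏ a ∈ Finset.range (k + 1), ∏ b ∈ Finset.range (k + 1),
      if 1 ≤ a + b ∧ a + b ≤ k then F a b else 1 := by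
  simp_rw [Finset.prod_range]
  rw [← Fintype.prod_prod_type' (f := fun a b : Fin (k + 1) =>
    if 1 ≤ (a : ℕ) + b ∧ (a : ℕ) + b ≤ k then F a b else 1), ← Finset.prod_filter]
  exact (Finset.prod_subtype _ (fun x => by simp)
    (fun x : Fin (k + 1) × Fin (k + 1) => F x.1 x.2)).symm

theorem Idx.sum_eq {M : Type*} [AddCommMonoid M] (k : ℕ) (F : ℕ → ℕ → M) :
    ∑ β : Idx k, F β.1.1 β.1.2 = ∑ a ∈ Finset.range (k + 1), ∑ b ∈ Finset.range (k + 1),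
      if 1 ≤ a + b ∧ a + b ≤ k then F a b else 0 :=
  Idx.prod_eq (M := Multiplicative M) k F

theorem Idx.sum_fst (k : ℕ) : ∑ β : Idx k, (β.1.1 : ℕ) = ∑ β : Idx k, (β.1.2 : ℕ) := by
  rw [Idx.sum_eq k (fun a _ => a), Idx.sum_eq k (fun _ b => b), Finset.sum_comm]
  simp_rw [add_comm]

theorem Idx.sum_snd (k : ℕ) : 6 * ∑ β : Idx k, (β.1.2 : ℕ) = k * (k + 1) * (k + 2) := by
  rw [← Idx.sum_fst, Idx.sum_eq k (fun a _ => a)]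
  have h : ∀ a ∈ Finset.range (k + 1), (∑ b ∈ Finset.range (k + 1),
      if 1 ≤ a + b ∧ a + b ≤ k then a else 0) = a * (k + 1 - a) := by
    intro a ha
    rw [Finset.mem_range] at ha
    have : ∀ b ∈ Finset.range (k + 1), (if 1 ≤ a + b ∧ a + b ≤ k then a else 0)
        = if b ∈ Finset.range (k + 1 - a) then a else 0 := by
      intro b _
      rcases Nat.eq_zero_or_pos a with rfl | h0
      · simp
      · exact if_congr (by rw [Finset.mem_range]; omega) rfl rfl
    rw [Finset.sum_congr rfl this, Finset.sum_ite_mem, Finset.sum_const,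
      Finset.inter_eq_right.2 (Finset.range_subset_range.2 (by omega))]
    simp [mul_comm]
  rw [Finset.sum_congr rfl h]
  clear h
  induction k with
  | zero => simp
  | succ k ih =>
    have e : ∀ a ∈ Finset.range (k + 1), a * (k + 1 + 1 - a) = a * (k + 1 - a) + a := by
      intro a ha
      rw [Finset.mem_range] at ha
      rw [show k + 1 + 1 - a = (k + 1 - a) + 1 by omega]
      ring
    rw [Finset.sum_range_succ, Finset.sum_congr rfl e, Finset.sum_add_distrib, mul_add, mul_add, ih]
    have := Finset.sum_range_id_mul_two (k + 1)
    simp only [Nat.add_sub_cancel] at this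
    simp only [Nat.add_sub_cancel_left]
    linarith

/-- The `j`-th Hasse derivative in the second variable of the phase polynomial at `(s, y)`. -/
def phaseDeriv (k : ℕ) (x : Idx k → ℝ) (j : ℕ) (s y : ℝ) : ℝ :=
  ∑ β : Idx k, x β * (s ^ (β.1.1 : ℕ) * ((β.1.2 : ℕ).choose j * y ^ ((β.1.2 : ℕ) - j)))

/-- The Newton polynomial of degree `a` with nodes `t 0, …, t (a - 1)`. -/
def newtonPoly (t : ℕ → ℝ) (a : ℕ) : Polynomial ℝ :=
  ∏ l ∈ Finset.range a, (Polynomial.X - Polynomial.C (t l))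

theorem newtonPoly_monic (t : ℕ → ℝ) (a : ℕ) : (newtonPoly t a).Monic :=
  Polynomial.monic_prod_of_monic _ _ fun _ _ => Polynomial.monic_X_sub_C _

theorem natDegree_newtonPoly (t : ℕ → ℝ) (a : ℕ) : (newtonPoly t a).natDegree = a := by
  rw [newtonPoly, Polynomial.natDegree_prod_of_monic _ _
    fun _ _ => Polynomial.monic_X_sub_C _]
  simp

theorem eval_newtonPoly (t : ℕ → ℝ) (a : ℕ) (s : ℝ) :
    (newtonPoly t a).eval s = ∏ l ∈ Finset.range a, (s - t l) := by
  simp [newtonPoly, Polynomial.eval_prod]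

theorem eval_newtonPoly_node (t : ℕ → ℝ) {a m : ℕ} (h : m < a) :
    (newtonPoly t a).eval (t m) = 0 := by
  rw [eval_newtonPoly]
  exact Finset.prod_eq_zero (Finset.mem_range.2 h) (sub_self _)

/-- The change of coordinates from Newton coefficients to monomial coefficients. -/
def newtonMatrix (k : ℕ) (t : ℕ → ℝ) : Matrix (Idx k) (Idx k) ℝ := fun β γ =>
  if β.1.2 = γ.1.2 then (newtonPoly t γ.1.1).coeff β.1.1 else 0

theorem det_newtonMatrix (k : ℕ) (t : ℕ → ℝ) : (newtonMatrix k t).det = 1 := by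
  have h : (newtonMatrix k t).BlockTriangular (fun β => β.1.1) := by
    intro β γ h
    unfold newtonMatrix
    rw [Polynomial.coeff_eq_zero_of_natDegree_lt, ite_self]
    rw [natDegree_newtonPoly]
    exact h
  rw [h.det_fintype]
  refine Finset.prod_eq_one fun a _ => ?_
  refine Eq.trans (congrArg _ ?_) Matrix.det_one
  ext ⟨β, hβ⟩ ⟨γ, hγ⟩
  simp only [Matrix.toSquareBlock_def, Matrix.of_apply, newtonMatrix, Matrix.one_apply,
    Subtype.mk.injEq]
  have e : (β.1.1 : ℕ) = (newtonPoly t γ.1.1).natDegree := by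
    rw [natDegree_newtonPoly, hβ, hγ]
  rw [e, (newtonPoly_monic t _).coeff_natDegree]
  refine if_congr ⟨fun h => ?_, fun h => by rw [h]⟩ rfl rfl
  exact Subtype.ext (Prod.ext (hβ.trans hγ.symm) h)

theorem phaseDeriv_newton (k : ℕ) (t : ℕ → ℝ) (c : Idx k → ℝ) (j : ℕ) (s y : ℝ) :
    phaseDeriv k ((newtonMatrix k t).mulVec c) j s y =
      ∑ γ : Idx k, c γ * (((newtonPoly t γ.1.1).eval s -
        if (γ.1.2 : ℕ) = 0 then (newtonPoly t γ.1.1).eval 0 else 0) *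
        ((γ.1.2 : ℕ).choose j * y ^ ((γ.1.2 : ℕ) - j))) := by
  unfold phaseDeriv Matrix.mulVec dotProduct
  simp_rw [Finset.sum_mul]
  rw [Finset.sum_comm]
  refine Finset.sum_congr rfl fun γ _ => ?_
  have hγ := γ.2
  set a := (γ.1.1 : ℕ)
  set b := (γ.1.2 : ℕ) with hb
  set g : ℝ := (b.choose j : ℝ) * y ^ (b - j)
  set N := newtonPoly t a
  have hdeg : N.natDegree = a := natDegree_newtonPoly t a
  have e1 : ∀ β : Idx k, newtonMatrix k t β γ * c γ *
      (s ^ (β.1.1 : ℕ) * (((β.1.2 : ℕ).choose j : ℝ) * y ^ ((β.1.2 : ℕ) - j))) =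
      (fun a' b' : ℕ => if b' = b then N.coeff a' * s ^ a' * (c γ * g) else 0)
        β.1.1 β.1.2 := by
    intro β
    simp only [newtonMatrix]
    by_cases h : β.1.2 = γ.1.2
    · rw [if_pos h, h, if_pos rfl]; ring
    · rw [if_neg h, if_neg (fun e => h (Fin.ext e))]; ring
  rw [Finset.sum_congr rfl fun β _ => e1 β, Idx.sum_eq k fun a' b' =>
    if b' = b then N.coeff a' * s ^ a' * (c γ * g) else 0]
  have e2 : ∀ a' ∈ Finset.range (k + 1), (∑ b' ∈ Finset.range (k + 1),
      if 1 ≤ a' + b' ∧ a' + b' ≤ k then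
        (if b' = b then N.coeff a' * s ^ a' * (c γ * g) else 0) else 0) =
      (N.coeff a' * s ^ a' - if a' = 0 then (if b = 0 then N.eval 0 else 0) else 0)
        * (c γ * g) := by
    intro a' ha'
    rw [Finset.mem_range] at ha'
    rw [Finset.sum_eq_single b]
    · rw [if_pos rfl]
      by_cases h0 : a' = 0
      · subst h0
        by_cases hb0 : b = 0
        · simp [hb0, Polynomial.coeff_zero_eq_eval_zero]
        · rw [if_pos (by omega)]; simp [hb0]
      · by_cases h : a' + b ≤ k
        · rw [if_pos (by omega)]; simp [h0]
        · rw [if_neg (by omega), Polynomial.coeff_eq_zero_of_natDegree_lt (by omega)]; simp [h0]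
    · intro b' _ hb'
      simp [hb']
    · intro h
      exact absurd (Finset.mem_range.2 γ.1.2.2) h
  rw [Finset.sum_congr rfl e2, ← Finset.sum_mul, Finset.sum_sub_distrib,
    ← Polynomial.eval_eq_sum_range' (by omega : N.natDegree < k + 1)]
  simp
  ring

theorem phaseDeriv_sub (k : ℕ) (x x' : Idx k → ℝ) (j : ℕ) (s y : ℝ) :
    phaseDeriv k (x - x') j s y = phaseDeriv k x j s y - phaseDeriv k x' j s y := by
  simp [phaseDeriv, sub_mul, Finset.sum_sub_distrib]

theorem phaseDeriv_newton_of_pos {k : ℕ} (t : ℕ → ℝ) (c : Idx k → ℝ) {j : ℕ} (hj : 1 ≤ j)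
    (s y : ℝ) :
    phaseDeriv k ((newtonMatrix k t).mulVec c) j s y =
      ∑ γ : Idx k, c γ * ((newtonPoly t γ.1.1).eval s *
        ((γ.1.2 : ℕ).choose j * y ^ ((γ.1.2 : ℕ) - j))) := by
  rw [phaseDeriv_newton]
  refine Finset.sum_congr rfl fun γ _ => ?_
  by_cases h : (γ.1.2 : ℕ) = 0
  · rw [h, Nat.choose_eq_zero_of_lt (by omega : 0 < j)]
    simp
  · rw [if_neg h, sub_zero]

theorem phaseDeriv_newton_zero_sub (k : ℕ) (t : ℕ → ℝ) (c : Idx k → ℝ) (s y s' y' : ℝ) :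
    phaseDeriv k ((newtonMatrix k t).mulVec c) 0 s y -
        phaseDeriv k ((newtonMatrix k t).mulVec c) 0 s' y' =
      ∑ γ : Idx k, c γ * ((newtonPoly t γ.1.1).eval s * y ^ (γ.1.2 : ℕ) -
        (newtonPoly t γ.1.1).eval s' * y' ^ (γ.1.2 : ℕ)) := by
  rw [phaseDeriv_newton, phaseDeriv_newton, ← Finset.sum_sub_distrib]
  refine Finset.sum_congr rfl fun γ _ => ?_
  by_cases h : (γ.1.2 : ℕ) = 0
  · rw [if_pos h, h]
    simp
    ring
  · rw [if_neg h]
    simp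
    ring

/-- The parameters `x` for which the phase has controlled vertical derivatives at the nodes
`(t i, y i)` and oscillates by at most `R` between them. -/
def nodeSet (k : ℕ) (t y : ℕ → ℝ) (W R : ℝ) : Set (Idx k → ℝ) :=
  {x | (∀ i ≤ k, ∀ j, 1 ≤ j → j ≤ k → |phaseDeriv k x j (t i) (y i)| ≤ R * W ^ j) ∧
    ∀ i ≤ k, |phaseDeriv k x 0 (t i) (y i) - phaseDeriv k x 0 (t 0) (y 0)| ≤ R}

theorem sub_mem_nodeSet {k : ℕ} {t y : ℕ → ℝ} {W R : ℝ} {x x' : Idx k → ℝ}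
    (hx : x ∈ nodeSet k t y W R) (hx' : x' ∈ nodeSet k t y W R) :
    x - x' ∈ nodeSet k t y W (2 * R) := by
  refine ⟨fun i hi j hj hjk => ?_, fun i hi => ?_⟩
  · rw [phaseDeriv_sub]
    have := abs_sub (phaseDeriv k x j (t i) (y i)) (phaseDeriv k x' j (t i) (y i))
    linarith [hx.1 i hi j hj hjk, hx'.1 i hi j hj hjk]
  · rw [phaseDeriv_sub, phaseDeriv_sub, sub_sub_sub_comm]
    have := abs_sub (phaseDeriv k x 0 (t i) (y i) - phaseDeriv k x 0 (t 0) (y 0))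
      (phaseDeriv k x' 0 (t i) (y i) - phaseDeriv k x' 0 (t 0) (y 0))
    linarith [hx'.2 i hi, hx.2 i hi]

/-- The order of elimination of the Newton coefficients. -/
def Idx.rank {k : ℕ} (γ : Idx k) : ℕ := γ.1.1 * (k + 1) + (k - γ.1.2)

theorem Idx.rank_lt {k : ℕ} {γ γ' : Idx k}
    (h : (γ.1.1 : ℕ) < γ'.1.1 ∨ (γ.1.1 : ℕ) = γ'.1.1 ∧ (γ'.1.2 : ℕ) < γ.1.2) :
    γ.rank < γ'.rank := by
  unfold Idx.rank
  have h1 := γ.2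
  have h2 := γ'.2
  rcases h with h | ⟨h, h'⟩
  · have : ((γ.1.1 : ℕ) + 1) * (k + 1) ≤ γ'.1.1 * (k + 1) := Nat.mul_le_mul_right _ h
    rw [add_mul] at this
    omega
  · rw [h]
    omega

theorem Idx.ext_iff {k : ℕ} {γ γ' : Idx k} :
    γ = γ' ↔ (γ.1.1 : ℕ) = γ'.1.1 ∧ (γ.1.2 : ℕ) = γ'.1.2 :=
  ⟨fun h => by rw [h]; exact ⟨rfl, rfl⟩,
    fun h => Subtype.ext (Prod.ext (Fin.ext h.1) (Fin.ext h.2))⟩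

theorem Idx.rank_injective (k : ℕ) : Function.Injective (Idx.rank (k := k)) := by
  intro γ γ' h
  by_contra hne
  rw [Idx.ext_iff] at hne
  have : ((γ.1.1 : ℕ) < γ'.1.1 ∨ (γ.1.1 : ℕ) = γ'.1.1 ∧ (γ'.1.2 : ℕ) < γ.1.2) ∨
    ((γ'.1.1 : ℕ) < γ.1.1 ∨ (γ'.1.1 : ℕ) = γ.1.1 ∧ (γ.1.2 : ℕ) < γ'.1.2) := by omega
  rcases this with h1 | h1
  · exact absurd h (Idx.rank_lt h1).ne
  · exact absurd h.symm (Idx.rank_lt h1).ne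

/-- The leading Newton coefficient is controlled by the node carrying its index. -/
theorem abs_coeff_mul_newton_le {k : ℕ} {t y : ℕ → ℝ} {W R : ℝ} {z : Idx k → ℝ} {γ : Idx k}
    (hz : ∀ γ' : Idx k, γ'.rank < γ.rank → z γ' = 0)
    (hmem : (newtonMatrix k t).mulVec z ∈ nodeSet k t y W R) :
    |z γ| * |(newtonPoly t γ.1.1).eval (t γ.1.1)| ≤ R * W ^ (γ.1.2 : ℕ) := by
  have hγ := γ.2
  rw [← abs_mul]
  by_cases hb : (γ.1.2 : ℕ) = 0
  · have h := hmem.2 γ.1.1 (by omega)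
    rw [phaseDeriv_newton_zero_sub, Finset.sum_eq_single γ] at h
    · rw [hb, eval_newtonPoly_node t (by omega : 0 < (γ.1.1 : ℕ))] at h
      rw [hb]
      simpa using h
    · intro γ' _ hne
      by_cases h1 : γ'.rank < γ.rank
      · rw [hz _ h1, zero_mul]
      · have h2 : (γ.1.1 : ℕ) < γ'.1.1 := by
          by_contra h2
          have := mt Idx.ext_iff.2 hne
          exact h1 (Idx.rank_lt (by omega))
        rw [eval_newtonPoly_node t h2, eval_newtonPoly_node t (by omega : 0 < (γ'.1.1 : ℕ))]
        simp
    · simp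
  · have h := hmem.1 γ.1.1 (by omega) γ.1.2 (by omega) (by omega)
    rw [phaseDeriv_newton_of_pos t z (by omega), Finset.sum_eq_single γ] at h
    · simpa using h
    · intro γ' _ hne
      by_cases h1 : γ'.rank < γ.rank
      · rw [hz _ h1, zero_mul]
      · by_cases h2 : (γ.1.1 : ℕ) < γ'.1.1
        · rw [eval_newtonPoly_node t h2]
          simp
        · have h3 := mt Idx.ext_iff.2 hne
          have h4 : ¬ _ := mt Idx.rank_lt h1
          rw [Nat.choose_eq_zero_of_lt (by omega : (γ'.1.2 : ℕ) < γ.1.2)]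
          simp
    · simp

/-- The nodes are `r`-separated, with `t (k - 1)` the lowest and `t k` the highest. -/
def NodeConfig (k : ℕ) (r : ℝ) (t : ℕ → ℝ) : Prop :=
  (∀ i ≤ k, ∀ l ≤ k, i ≠ l → r ≤ |t i - t l|) ∧ ∀ i ≤ k, t (k - 1) ≤ t i ∧ t i ≤ t k

/-- The vertical distance from node `m` to the chord through the two extreme nodes. -/
def chordGap (k : ℕ) (t y : ℕ → ℝ) (m : ℕ) : ℝ :=
  y m - (y (k - 1) + (t m - t (k - 1)) / (t k - t (k - 1)) * (y k - y (k - 1)))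

theorem NodeConfig.pow_le {k : ℕ} {r : ℝ} {t : ℕ → ℝ} (ht : NodeConfig k r t) (hr : 0 < r)
    {m i : ℕ} (hmi : m ≤ i) (hi : i ≤ k) : r ^ m ≤ |(newtonPoly t m).eval (t i)| := by
  rw [eval_newtonPoly, Finset.abs_prod]
  calc r ^ m = ∏ _l ∈ Finset.range m, r := by simp
    _ ≤ _ := Finset.prod_le_prod (fun _ _ => hr.le) fun l hl => by
      rw [Finset.mem_range] at hl
      exact ht.1 i hi l (by omega) (by omega)

/-- The extremal coefficients satisfy a second bound, coming from the three nodes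
`m`, `k - 1` and `k`. -/
theorem abs_coeff_mul_chordGap_le {k : ℕ} {t y : ℕ → ℝ} {W R r : ℝ} (hr : 0 < r)
    (ht : NodeConfig k r t) {z : Idx k → ℝ} {γ : Idx k}
    (hz : ∀ γ' : Idx k, γ'.rank < γ.rank → z γ' = 0)
    (hmem : (newtonMatrix k t).mulVec z ∈ nodeSet k t y W R)
    (hγk : (γ.1.1 : ℕ) + γ.1.2 = k) (hγ2 : (γ.1.1 : ℕ) + 2 ≤ k) :
    |z γ| * |chordGap k t y γ.1.1| ≤ 2 * R * W ^ ((γ.1.2 : ℕ) - 1) * (r⁻¹) ^ (γ.1.1 : ℕ) := by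
  set m := (γ.1.1 : ℕ) with hm
  obtain ⟨j, hj⟩ : ∃ j, (γ.1.2 : ℕ) = j + 1 := ⟨γ.1.2 - 1, by omega⟩
  have hterm : ∀ γ' : Idx k, ∃ v e : ℝ, ∀ s y : ℝ, z γ' * ((newtonPoly t γ'.1.1).eval s *
      ((γ'.1.2 : ℕ).choose j * y ^ ((γ'.1.2 : ℕ) - j))) =
      (newtonPoly t m).eval s *
        ((if γ' = γ then (j + 1) * z γ * y else 0) + v + e * (s - t m)) := by
    intro γ'
    have hγ' := γ'.2
    by_cases h0 : γ' = γ
    · refine ⟨0, 0, fun s y => ?_⟩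
      rw [if_pos h0, h0, hj, Nat.add_sub_cancel_left, ← hm]
      simp
      ring
    by_cases h1 : γ'.rank < γ.rank
    · refine ⟨0, 0, fun s y => ?_⟩
      rw [if_neg h0, hz _ h1]
      simp
    have h3 := mt Idx.ext_iff.2 h0
    have h4 : ¬ _ := mt Idx.rank_lt h1
    by_cases h5 : (γ'.1.2 : ℕ) < j
    · refine ⟨0, 0, fun s y => ?_⟩
      rw [if_neg h0, Nat.choose_eq_zero_of_lt h5]
      simp
    have h6 : (γ'.1.2 : ℕ) = j := by omega
    by_cases h7 : (γ'.1.1 : ℕ) = m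
    · refine ⟨z γ', 0, fun s y => ?_⟩
      rw [if_neg h0, h6, h7]
      simp
      ring
    · have h8 : (γ'.1.1 : ℕ) = m + 1 := by omega
      refine ⟨0, z γ', fun s y => ?_⟩
      rw [if_neg h0, h6, h8, eval_newtonPoly, eval_newtonPoly, Finset.prod_range_succ]
      simp
      ring
  choose v e hve using hterm
  set A : ℕ → ℝ := fun i => (j + 1) * z γ * y i + (∑ γ', v γ') + (∑ γ', e γ') * (t i - t m)
    with hA
  have hAb : ∀ i, m ≤ i → i ≤ k → |A i| ≤ R * W ^ j * (r⁻¹) ^ m := by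
    intro i hmi hi
    have h := hmem.1 i hi j (by omega) (by omega)
    rw [phaseDeriv_newton_of_pos t z (by omega), Finset.sum_congr rfl fun γ' _ => hve γ' _ _,
      ← Finset.mul_sum, Finset.sum_add_distrib, Finset.sum_add_distrib, ← Finset.sum_mul,
      Finset.sum_ite_eq' Finset.univ γ, if_pos (Finset.mem_univ _), abs_mul] at h
    rw [inv_pow, ← div_eq_mul_inv, le_div_iff₀ (pow_pos hr m), mul_comm]
    exact (mul_le_mul_of_nonneg_right (ht.pow_le hr hmi hi) (abs_nonneg _)).trans h
  set l := (t m - t (k - 1)) / (t k - t (k - 1)) with hl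
  have hlt : 0 < t k - t (k - 1) := by
    have h1 := ht.1 k le_rfl (k - 1) (by omega) (by omega)
    have h2 := (ht.2 k le_rfl).1
    rw [abs_of_nonneg (by linarith)] at h1
    linarith
  have hl0 : 0 ≤ l := div_nonneg (by linarith [(ht.2 m (by omega)).1]) hlt.le
  have hl1 : l ≤ 1 := (div_le_one hlt).2 (by linarith [(ht.2 m (by omega)).2])
  have hlm : l * (t k - t (k - 1)) = t m - t (k - 1) := div_mul_cancel₀ _ hlt.ne'
  have hgap : (j + 1) * z γ * chordGap k t y m = A m - l * A k - (1 - l) * A (k - 1) := by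
    simp only [hA, chordGap, ← hl]
    linear_combination (∑ γ', e γ') * hlm
  have hu : |z γ| ≤ |(j + 1) * z γ| := by
    rw [abs_mul, abs_of_pos (by positivity : (0 : ℝ) < j + 1)]
    exact le_mul_of_one_le_left (abs_nonneg _) (by linarith [(Nat.cast_nonneg j : (0 : ℝ) ≤ j)])
  rw [hj, Nat.add_sub_cancel]
  set Q := R * W ^ j * (r⁻¹) ^ m with hQ
  calc |z γ| * |chordGap k t y m| ≤ |(j + 1) * z γ| * |chordGap k t y m| := by gcongr
    _ = |A m - l * A k - (1 - l) * A (k - 1)| := by rw [← abs_mul, hgap]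
    _ ≤ |A m| + |l * A k| + |(1 - l) * A (k - 1)| :=
        (abs_sub _ _).trans (add_le_add_left (abs_sub _ _) _)
    _ ≤ Q + l * Q + (1 - l) * Q := by
        rw [abs_mul, abs_mul, abs_of_nonneg hl0, abs_of_nonneg (sub_nonneg.2 hl1)]
        have := sub_nonneg.2 hl1
        gcongr
        · exact hAb m le_rfl (by omega)
        · exact hAb k (by omega) le_rfl
        · exact hAb (k - 1) (by omega) (by omega)
    _ = _ := by rw [hQ]; ring

theorem isClosed_mem_nodeSet {X : Type*} [TopologicalSpace X] {k : ℕ} {x : X → Idx k → ℝ}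
    {t y : X → ℕ → ℝ} (hx : Continuous x) (ht : ∀ i, Continuous fun q => t q i)
    (hy : ∀ i, Continuous fun q => y q i) (W R : ℝ) :
    IsClosed {q | x q ∈ nodeSet k (t q) (y q) W R} := by
  have hx' : ∀ β, Continuous fun q => x q β := fun β => (continuous_apply β).comp hx
  have hD : ∀ j i, Continuous fun q => phaseDeriv k (x q) j (t q i) (y q i) := by
    intro j i
    unfold phaseDeriv
    have := ht i
    have := hy i
    fun_prop
  have e : {q | x q ∈ nodeSet k (t q) (y q) W R} =
      (⋂ i, ⋂ (_ : i ≤ k), ⋂ j, ⋂ (_ : 1 ≤ j), ⋂ (_ : j ≤ k),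
        {q | |phaseDeriv k (x q) j (t q i) (y q i)| ≤ R * W ^ j}) ∩
      ⋂ i, ⋂ (_ : i ≤ k), {q | |phaseDeriv k (x q) 0 (t q i) (y q i) -
        phaseDeriv k (x q) 0 (t q 0) (y q 0)| ≤ R} := by
    ext q
    simp [nodeSet]
  rw [e]
  exact (isClosed_iInter fun i => isClosed_iInter fun _ => isClosed_iInter fun j =>
    isClosed_iInter fun _ => isClosed_iInter fun _ =>
      isClosed_le (hD j i).abs continuous_const).inter
    (isClosed_iInter fun i => isClosed_iInter fun _ =>
      isClosed_le ((hD 0 i).sub (hD 0 0)).abs continuous_const)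

/-- The gain over the trivial bound for the extremal coefficient with first index `a`. -/
def extremalGain (k : ℕ) (t y : ℕ → ℝ) (W r : ℝ) (a : ℕ) : ℝ :=
  if a = k then r ^ k * ∏ l ∈ Finset.range k, |t k - t l|⁻¹
  else if a + 2 ≤ k then (1 + W * |chordGap k t y a|)⁻¹ else 1

theorem extremalGain_nonneg (k : ℕ) (t y : ℕ → ℝ) {W r : ℝ} (hr : 0 < r) (hW : 0 < W) (a : ℕ) :
    0 ≤ extremalGain k t y W r a := by
  unfold extremalGain
  split_ifs <;> positivity

theorem prod_extremalGain {k : ℕ} (hk : 2 ≤ k) (t y : ℕ → ℝ) (W r : ℝ) :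
    (∏ γ : Idx k, if (γ.1.1 : ℕ) + γ.1.2 = k then extremalGain k t y W r γ.1.1 else 1) =
      (∏ a ∈ Finset.range (k - 1), (1 + W * |chordGap k t y a|)⁻¹) *
        (r ^ k * ∏ l ∈ Finset.range k, |t k - t l|⁻¹) := by
  rw [Idx.prod_eq k fun a b => if a + b = k then extremalGain k t y W r a else 1]
  have hinner : ∀ a ∈ Finset.range (k + 1), (∏ b ∈ Finset.range (k + 1),
      if 1 ≤ a + b ∧ a + b ≤ k then (if a + b = k then extremalGain k t y W r a else 1) else 1) =
      extremalGain k t y W r a := by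
    intro a ha
    rw [Finset.mem_range] at ha
    rw [Finset.prod_eq_single (k - a)]
    · rw [if_pos (by omega), if_pos (by omega)]
    · intro b _ hb
      rw [if_neg (by omega : ¬ a + b = k), ite_self]
    · intro h
      exact absurd (Finset.mem_range.2 (by omega)) h
  rw [Finset.prod_congr rfl hinner, Finset.prod_range_succ]
  obtain ⟨n, rfl⟩ : ∃ n, k = n + 2 := ⟨k - 2, by omega⟩
  rw [show n + 2 = n + 1 + 1 from rfl, Finset.prod_range_succ]
  unfold extremalGain
  rw [if_pos rfl, if_neg (by omega), if_neg (by omega), mul_one, Nat.add_sub_cancel]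
  congr 1
  refine Finset.prod_congr rfl fun a ha => ?_
  rw [Finset.mem_range] at ha
  rw [if_neg (by omega), if_pos (by omega)]

theorem abs_coeff_le_of_mem_nodeSet {k : ℕ} {t y : ℕ → ℝ} {W r : ℝ} (hr : 0 < r)
    (hW : 0 < W) (ht : NodeConfig k r t) {z : Idx k → ℝ} {γ : Idx k}
    (hz : ∀ γ' : Idx k, γ'.rank < γ.rank → z γ' = 0)
    (hmem : (newtonMatrix k t).mulVec z ∈ nodeSet k t y W (2 * 1)) :
    |z γ| ≤ 6 * W ^ (γ.1.2 : ℕ) * (r⁻¹) ^ (γ.1.1 : ℕ) *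
      (if (γ.1.1 : ℕ) + γ.1.2 = k then extremalGain k t y W r γ.1.1 else 1) := by
  have hγ := γ.2
  have h1 := abs_coeff_mul_newton_le hz hmem
  have hp := ht.pow_le hr (le_refl (γ.1.1 : ℕ)) (by omega)
  have hrp : 0 < r ^ (γ.1.1 : ℕ) := pow_pos hr _
  have hrW : 0 ≤ W ^ (γ.1.2 : ℕ) * (r⁻¹) ^ (γ.1.1 : ℕ) := by positivity
  have h2 : |z γ| ≤ 2 * (W ^ (γ.1.2 : ℕ) * (r⁻¹) ^ (γ.1.1 : ℕ)) := by
    rw [inv_pow, ← mul_assoc, ← div_eq_mul_inv, le_div_iff₀ hrp]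
    exact (mul_le_mul_of_nonneg_left hp (abs_nonneg _)).trans (h1.trans (by linarith))
  by_cases hs : (γ.1.1 : ℕ) + γ.1.2 = k
  swap
  · rw [if_neg hs]
    linarith
  rw [if_pos hs]
  unfold extremalGain
  by_cases hak : (γ.1.1 : ℕ) = k
  · rw [if_pos hak]
    have hb : (γ.1.2 : ℕ) = 0 := by omega
    rw [hb, hak, eval_newtonPoly, Finset.abs_prod] at h1
    rw [hak, eval_newtonPoly, Finset.abs_prod] at hp
    rw [hb, hak, inv_pow, Finset.prod_inv_distrib]
    rw [hak] at hrp
    have hp' := hrp.trans_le hp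
    have e : 6 * W ^ 0 * (r ^ k)⁻¹ * (r ^ k * (∏ l ∈ Finset.range k, |t k - t l|)⁻¹) =
        6 / ∏ l ∈ Finset.range k, |t k - t l| := by
      field_simp
    rw [e, le_div_iff₀ hp']
    exact h1.trans (by norm_num)
  rw [if_neg hak]
  by_cases ha2 : (γ.1.1 : ℕ) + 2 ≤ k
  · rw [if_pos ha2]
    have h3 := abs_coeff_mul_chordGap_le hr ht hz hmem hs ha2
    rw [← div_eq_mul_inv _ (1 + _), le_div_iff₀ (by positivity)]
    have h4 : W * (|z γ| * |chordGap k t y γ.1.1|) ≤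
        4 * (W ^ (γ.1.2 : ℕ) * (r⁻¹) ^ (γ.1.1 : ℕ)) := by
      refine (mul_le_mul_of_nonneg_left h3 hW.le).trans (le_of_eq ?_)
      obtain ⟨j, hj⟩ : ∃ j, (γ.1.2 : ℕ) = j + 1 := ⟨γ.1.2 - 1, by omega⟩
      rw [hj, Nat.add_sub_cancel, pow_succ]
      ring
    linarith
  · rw [if_neg ha2]
    linarith

/-- The volume of the set of phases controlled at a configuration of nodes. -/
theorem volume_nodeSet_le {k : ℕ} (hk : 2 ≤ k) {t y : ℕ → ℝ} {W r : ℝ} (hr : 0 < r) (hW : 0 < W)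
    (ht : NodeConfig k r t) :
    volume (nodeSet k t y W 1) ≤ ENNReal.ofReal
      (6 ^ Fintype.card (Idx k) * W ^ (∑ β : Idx k, (β.1.2 : ℕ)) *
        (r⁻¹) ^ (∑ β : Idx k, (β.1.2 : ℕ)) *
        ((∏ a ∈ Finset.range (k - 1), (1 + W * |chordGap k t y a|)⁻¹) *
          (r ^ k * ∏ l ∈ Finset.range k, |t k - t l|⁻¹))) := by
  set M := newtonMatrix k t with hM
  have hdet : LinearMap.det (Matrix.toLin' M) = 1 := by
    rw [LinearMap.det_toLin', det_newtonMatrix]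
  have hvol : volume (nodeSet k t y W 1) = volume (Matrix.toLin' M ⁻¹' nodeSet k t y W 1) := by
    rw [Measure.addHaar_preimage_linearMap _ (by rw [hdet]; exact one_ne_zero), hdet]
    simp
  have hmeas : MeasurableSet (Matrix.toLin' M ⁻¹' nodeSet k t y W 1) :=
    (isClosed_mem_nodeSet (x := fun c => Matrix.toLin' M c) (t := fun _ => t) (y := fun _ => y)
      (LinearMap.continuous_of_finiteDimensional _)
      (fun _ => continuous_const) (fun _ => continuous_const) W 1).measurableSet
  rw [hvol]
  refine (volume_le_prod_of_triangular Idx.rank (Idx.rank_injective k) _ hmeas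
    (fun γ => 6 * W ^ (γ.1.2 : ℕ) * (r⁻¹) ^ (γ.1.1 : ℕ) *
      (if (γ.1.1 : ℕ) + γ.1.2 = k then extremalGain k t y W r γ.1.1 else 1)) ?_).trans
    (le_of_eq ?_)
  · intro c hc c' hc' γ hcc
    have hmem : M.mulVec (c - c') ∈ nodeSet k t y W (2 * 1) := by
      rw [Matrix.mulVec_sub]
      exact sub_mem_nodeSet hc hc'
    exact abs_coeff_le_of_mem_nodeSet hr hW ht
      (fun γ' h => by rw [Pi.sub_apply, hcc γ' h, sub_self]) hmem
  · rw [← ENNReal.ofReal_prod_of_nonneg fun γ _ => mul_nonneg (by positivity) (by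
      split_ifs
      · exact extremalGain_nonneg k t y hr hW _
      · exact zero_le_one), Finset.prod_mul_distrib, Finset.prod_mul_distrib,
      Finset.prod_mul_distrib, Finset.prod_const, Finset.card_univ, Finset.prod_pow_eq_pow_sum,
      Finset.prod_pow_eq_pow_sum, Idx.sum_fst, prod_extremalGain hk]

/-- The first coordinates of a tuple of points, as a sequence. -/
def nodeFst {k : ℕ} (p : Fin (k + 1) → ℝ × ℝ) (l : ℕ) : ℝ := (p (Fin.ofNat (k + 1) l)).1

/-- The second coordinates of a tuple of points, as a sequence. -/
def nodeSnd {k : ℕ} (p : Fin (k + 1) → ℝ × ℝ) (l : ℕ) : ℝ := (p (Fin.ofNat (k + 1) l)).2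

theorem continuous_nodeFst {k : ℕ} (l : ℕ) :
    Continuous fun p : Fin (k + 1) → ℝ × ℝ => nodeFst p l := by
  unfold nodeFst
  fun_prop

theorem continuous_nodeSnd {k : ℕ} (l : ℕ) :
    Continuous fun p : Fin (k + 1) → ℝ × ℝ => nodeSnd p l := by
  unfold nodeSnd
  fun_prop

/-- Admissible configurations of nodes in the unit square. -/
def goodNodes (k : ℕ) (r : ℝ) : Set (Fin (k + 1) → ℝ × ℝ) :=
  {p | (∀ i, p i ∈ Icc (0 : ℝ) 1 ×ˢ Icc (0 : ℝ) 1) ∧ NodeConfig k r (nodeFst p)}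

theorem measurableSet_goodNodes (k : ℕ) (r : ℝ) : MeasurableSet (goodNodes k r) := by
  have e : goodNodes k r = (⋂ i, {p | p i ∈ Icc (0 : ℝ) 1 ×ˢ Icc (0 : ℝ) 1}) ∩
      ((⋂ i, ⋂ (_ : i ≤ k), ⋂ l, ⋂ (_ : l ≤ k), ⋂ (_ : i ≠ l),
        {p | r ≤ |nodeFst p i - nodeFst p l|}) ∩
      ⋂ i, ⋂ (_ : i ≤ k), ({p | nodeFst p (k - 1) ≤ nodeFst p i} ∩
        {p | nodeFst p i ≤ nodeFst p k})) := by
    ext p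
    simp only [goodNodes, NodeConfig, mem_inter_iff, mem_iInter, mem_ofPred_eq]
  have hc := fun l => continuous_nodeFst (k := k) l
  rw [e]
  refine IsClosed.measurableSet (IsClosed.inter (isClosed_iInter fun i =>
    (isClosed_Icc.prod isClosed_Icc).preimage (continuous_apply i)) (IsClosed.inter
    (isClosed_iInter fun i => isClosed_iInter fun _ => isClosed_iInter fun l =>
      isClosed_iInter fun _ => isClosed_iInter fun _ => ?_)
    (isClosed_iInter fun i => isClosed_iInter fun _ => IsClosed.inter ?_ ?_)))
  · exact isClosed_le continuous_const ((hc i).sub (hc l)).abs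
  · exact isClosed_le (hc _) (hc _)
  · exact isClosed_le (hc _) (hc _)

theorem lintegral_mul_shear {φ h : ℝ → ℝ≥0∞} (hφ : Measurable φ) (hh : Measurable h) (c : ℝ)
    {s : ℝ → ℝ} (hs : Measurable s) :
    ∫⁻ a : ℝ × ℝ, φ (a.1 - c) * h (a.2 - s a.1) = (∫⁻ u, φ u) * ∫⁻ u, h u := by
  rw [Measure.volume_eq_prod, lintegral_prod _ (by fun_prop)]
  have e : ∀ a : ℝ, ∫⁻ b : ℝ, φ (a - c) * h (b - s a) = φ (a - c) * ∫⁻ u, h u := by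
    intro a
    rw [lintegral_const_mul _ (by fun_prop), lintegral_sub_right_eq_self]
  simp_rw [e]
  rw [lintegral_mul_const _ (by fun_prop), lintegral_sub_right_eq_self φ c]

theorem abs_chordGap_le_one {k : ℕ} {r : ℝ} {p : Fin (k + 1) → ℝ × ℝ} (hp : p ∈ goodNodes k r)
    {m : ℕ} (hm : m ≤ k) : |chordGap k (nodeFst p) (nodeSnd p) m| ≤ 1 := by
  have hy : ∀ l, 0 ≤ nodeSnd p l ∧ nodeSnd p l ≤ 1 := fun l => (hp.1 _).2
  have hord := hp.2.2 m hm
  set l := (nodeFst p m - nodeFst p (k - 1)) / (nodeFst p k - nodeFst p (k - 1)) with hl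
  have hl0 : 0 ≤ l := div_nonneg (by linarith) (by linarith)
  have hl1 : l ≤ 1 := div_le_one_of_le₀ (by linarith) (by linarith)
  obtain ⟨h1, h2⟩ := hy m
  obtain ⟨h3, h4⟩ := hy (k - 1)
  obtain ⟨h5, h6⟩ := hy k
  rw [chordGap, ← hl, abs_le]
  constructor <;> nlinarith [mul_nonneg hl0 h5, mul_nonneg (sub_nonneg.2 hl1) h3,
    mul_nonneg hl0 (sub_nonneg.2 h6), mul_nonneg (sub_nonneg.2 hl1) (sub_nonneg.2 h4)]

theorem abs_nodeFst_sub_le_one {k : ℕ} {r : ℝ} {p : Fin (k + 1) → ℝ × ℝ} (hp : p ∈ goodNodes k r)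
    (l m : ℕ) : |nodeFst p l - nodeFst p m| ≤ 1 := by
  have hy : ∀ l, 0 ≤ nodeFst p l ∧ nodeFst p l ≤ 1 := fun l => (hp.1 _).1
  rw [abs_le]
  constructor <;> linarith [hy l, hy m]

/-- The kernel `|u| ^ (-e)` truncated to `[-1, 1]`. -/
def rieszKernel (e u : ℝ) : ℝ≥0∞ :=
  (Icc (-1 : ℝ) 1).indicator (fun u => ENNReal.ofReal (|u| ^ (-e))) u

/-- The kernel `(1 + W |u|)⁻¹` truncated to `[-1, 1]`. -/
def gapKernel (W u : ℝ) : ℝ≥0∞ :=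
  (Icc (-1 : ℝ) 1).indicator (fun u => ENNReal.ofReal (1 + W * |u|)⁻¹) u

@[fun_prop]
theorem measurable_rieszKernel (e : ℝ) : Measurable (rieszKernel e) := by
  unfold rieszKernel
  exact Measurable.indicator (by fun_prop) measurableSet_Icc

@[fun_prop]
theorem measurable_gapKernel (W : ℝ) : Measurable (gapKernel W) := by
  unfold gapKernel
  exact Measurable.indicator (by fun_prop) measurableSet_Icc

/-- The factor attached to node `i` in the integration over configurations. -/
def nodeFactor (k : ℕ) (e W : ℝ) (i : Fin (k + 1)) (p : Fin (k + 1) → ℝ × ℝ) : ℝ≥0∞ :=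
  if (i : ℕ) = k then (Icc (0 : ℝ) 1 ×ˢ Icc (0 : ℝ) 1).indicator 1 (p i)
  else rieszKernel e (nodeFst p i - nodeFst p k) *
    if (i : ℕ) + 1 = k then (Icc (0 : ℝ) 1).indicator 1 (nodeSnd p i)
    else gapKernel W (chordGap k (nodeFst p) (nodeSnd p) i)

theorem measurable_nodeFactor (k : ℕ) (e W : ℝ) (i : Fin (k + 1)) :
    Measurable (nodeFactor k e W i) := by
  have hf := fun l => (continuous_nodeFst (k := k) l).measurable
  have hs := fun l => (continuous_nodeSnd (k := k) l).measurable
  unfold nodeFactor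
  by_cases hik : (i : ℕ) = k
  · simp only [if_pos hik]
    exact (measurable_one.indicator (measurableSet_Icc.prod measurableSet_Icc)).comp
      (measurable_pi_apply i)
  simp only [if_neg hik]
  refine Measurable.mul ((measurable_rieszKernel e).comp ((hf _).sub (hf _))) ?_
  by_cases hik1 : (i : ℕ) + 1 = k
  · simp only [if_pos hik1]
    exact (measurable_one.indicator measurableSet_Icc).comp (hs _)
  · simp only [if_neg hik1, chordGap]
    exact (measurable_gapKernel W).comp ((hs _).sub ((hs _).add
      ((((hf _).sub (hf _)).div ((hf _).sub (hf _))).mul ((hs _).sub (hs _)))))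

theorem nodeFactor_congr (k : ℕ) (e W : ℝ) (i : Fin (k + 1)) (p q : Fin (k + 1) → ℝ × ℝ)
    (h : ∀ j, i ≤ j → p j = q j) : nodeFactor k e W i p = nodeFactor k e W i q := by
  have hi := i.2
  have hn : ∀ l : ℕ, (i : ℕ) ≤ l → l ≤ k → p (Fin.ofNat (k + 1) l) = q (Fin.ofNat (k + 1) l) := by
    intro l h1 h2
    refine h _ ?_
    rw [Fin.le_def, Fin.val_ofNat, Nat.mod_eq_of_lt (by omega)]
    exact h1
  unfold nodeFactor
  by_cases hik : (i : ℕ) = k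
  · rw [if_pos hik, if_pos hik, h i le_rfl]
  · rw [if_neg hik, if_neg hik]
    unfold chordGap nodeFst nodeSnd
    rw [hn i le_rfl (by omega), hn k (by omega) le_rfl, hn (k - 1) (by omega) (by omega)]

theorem lintegral_nodeFactor_le {k : ℕ} (e : ℝ) {W : ℝ} (hW : 0 < W) (i : Fin (k + 1))
    (p : Fin (k + 1) → ℝ × ℝ) :
    ∫⁻ a, nodeFactor k e W i (Function.update p i a) ≤
      if (i : ℕ) = k then 1 else (∫⁻ u, rieszKernel e u) *
        if (i : ℕ) + 1 = k then 1 else ENNReal.ofReal (2 * Real.log (1 + W) / W) := by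
  have hi := i.2
  have hself : Fin.ofNat (k + 1) (i : ℕ) = i := by simp
  have hne : ∀ l : ℕ, l ≤ k → (i : ℕ) ≠ l → Fin.ofNat (k + 1) l ≠ i := by
    intro l hl hil hEq
    apply hil
    rw [← hEq, Fin.val_ofNat, Nat.mod_eq_of_lt (by omega)]
  unfold nodeFactor
  by_cases hik : (i : ℕ) = k
  · simp only [if_pos hik, Function.update_self]
    rw [lintegral_indicator_one (measurableSet_Icc.prod measurableSet_Icc),
      Measure.volume_eq_prod, Measure.prod_prod]
    simp
  simp only [if_neg hik]
  by_cases hik1 : (i : ℕ) + 1 = k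
  · simp only [if_pos hik1, nodeFst, nodeSnd, hself, Function.update_self,
      Function.update_of_ne (hne k le_rfl hik)]
    have := lintegral_mul_shear (measurable_rieszKernel e)
      (h := (Icc (0 : ℝ) 1).indicator 1) (measurable_one.indicator measurableSet_Icc)
      (p (Fin.ofNat (k + 1) k)).1 (s := fun _ => 0) measurable_const
    simp only [sub_zero] at this
    rw [this, lintegral_indicator_one measurableSet_Icc]
    simp
  · simp only [if_neg hik1, chordGap, nodeFst, nodeSnd, hself, Function.update_self,
      Function.update_of_ne (hne k le_rfl hik),
      Function.update_of_ne (hne (k - 1) (by omega) (by omega))]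
    set a := p (Fin.ofNat (k + 1) k)
    set b := p (Fin.ofNat (k + 1) (k - 1))
    rw [lintegral_mul_shear (measurable_rieszKernel e) (measurable_gapKernel W) a.1
      (s := fun u => b.2 + (u - b.1) / (a.1 - b.1) * (a.2 - b.2)) (by fun_prop)]
    gcongr
    exact lintegral_inv_one_add_le hW

theorem nodeFactor_of_mem {k : ℕ} {r : ℝ} {p : Fin (k + 1) → ℝ × ℝ} (hp : p ∈ goodNodes k r)
    (e W : ℝ) (i : Fin (k + 1)) : nodeFactor k e W i p = if (i : ℕ) = k then 1 else
      ENNReal.ofReal (|nodeFst p k - nodeFst p i| ^ (-e)) * if (i : ℕ) + 1 = k then 1 else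
        ENNReal.ofReal (1 + W * |chordGap k (nodeFst p) (nodeSnd p) i|)⁻¹ := by
  have hi := i.2
  have h1 : nodeFst p i - nodeFst p k ∈ Icc (-1 : ℝ) 1 := abs_le.1 (abs_nodeFst_sub_le_one hp _ _)
  have h2 : nodeSnd p i ∈ Icc (0 : ℝ) 1 := (hp.1 _).2
  have h3 : chordGap k (nodeFst p) (nodeSnd p) i ∈ Icc (-1 : ℝ) 1 :=
    abs_le.1 (abs_chordGap_le_one hp (by omega))
  unfold nodeFactor rieszKernel gapKernel
  rw [indicator_of_mem (hp.1 i), indicator_of_mem h1, indicator_of_mem h2, indicator_of_mem h3,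
    abs_sub_comm]
  rfl

/-- Splits a product over nodes according to the roles of the nodes. -/
theorem prod_nodes_eq {M : Type*} [CommMonoid M] {k : ℕ} (hk : 1 ≤ k) (A B : ℕ → M) :
    (∏ i : Fin (k + 1), if (i : ℕ) = k then 1 else A i * if (i : ℕ) + 1 = k then 1 else B i) =
      (∏ a ∈ Finset.range (k - 1), B a) * ∏ l ∈ Finset.range k, A l := by
  rw [← Finset.prod_range (fun i => if i = k then 1 else A i * if i + 1 = k then 1 else B i),
    Finset.prod_range_succ, if_pos rfl, mul_one]
  obtain ⟨n, rfl⟩ : ∃ n, k = n + 1 := ⟨k - 1, by omega⟩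
  rw [Finset.prod_congr rfl fun i hi => if_neg (Finset.mem_range.1 hi).ne,
    Finset.prod_mul_distrib, mul_comm, Finset.prod_range_succ (fun i => if i + 1 = n + 1 then 1
      else B i), if_pos rfl, mul_one, Nat.add_sub_cancel]
  congr 1
  exact Finset.prod_congr rfl fun i hi => if_neg (by have := Finset.mem_range.1 hi; omega)

theorem lintegral_goodNodes_le {k : ℕ} (hk : 1 ≤ k) (e r : ℝ) {W : ℝ} (hW : 0 < W) :
    ∫⁻ p in goodNodes k r, (∏ a ∈ Finset.range (k - 1),
        ENNReal.ofReal (1 + W * |chordGap k (nodeFst p) (nodeSnd p) a|)⁻¹) *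
          ∏ l ∈ Finset.range k, ENNReal.ofReal (|nodeFst p k - nodeFst p l| ^ (-e)) ≤
      ENNReal.ofReal (2 * Real.log (1 + W) / W) ^ (k - 1) * (∫⁻ u, rieszKernel e u) ^ k := by
  calc _ = ∫⁻ p in goodNodes k r, ∏ i, nodeFactor k e W i p := by
        refine setLIntegral_congr_fun (measurableSet_goodNodes k r) fun p hp => ?_
        simp only [nodeFactor_of_mem hp]
        exact (prod_nodes_eq hk _ _).symm
    _ ≤ ∫⁻ p, ∏ i, nodeFactor k e W i p := setLIntegral_le_lintegral _ _
    _ ≤ ∏ i : Fin (k + 1), _ := lintegral_prod_le_of_triangular _ _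
        (measurable_nodeFactor k e W) (nodeFactor_congr k e W) (lintegral_nodeFactor_le e hW)
    _ = _ := by
        rw [prod_nodes_eq hk (fun _ => ∫⁻ u, rieszKernel e u)
          (fun _ => ENNReal.ofReal (2 * Real.log (1 + W) / W))]
        simp

/-- The volume of controlled phases, integrated over all admissible configurations. -/
theorem lintegral_volume_nodeSet_le {k : ℕ} (hk : 2 ≤ k) {e r W : ℝ} (he : e ≤ 1)
    (hr : 0 < r) (hW : 0 < W) :
    ∫⁻ p in goodNodes k r, volume (nodeSet k (nodeFst p) (nodeSnd p) W 1) ≤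
      ENNReal.ofReal (6 ^ Fintype.card (Idx k) * W ^ (∑ β : Idx k, (β.1.2 : ℕ)) *
        (r⁻¹) ^ (∑ β : Idx k, (β.1.2 : ℕ)) * (r ^ e) ^ k) *
      (ENNReal.ofReal (2 * Real.log (1 + W) / W) ^ (k - 1) * (∫⁻ u, rieszKernel e u) ^ k) := by
  refine le_trans ?_ (mul_le_mul_right (lintegral_goodNodes_le (by omega) e r hW) _)
  rw [← lintegral_const_mul' _ _ ENNReal.ofReal_ne_top]
  refine setLIntegral_mono' (measurableSet_goodNodes k r) fun p hp => ?_
  refine (volume_nodeSet_le hk hr hW hp.2).trans ?_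
  rw [← ENNReal.ofReal_prod_of_nonneg fun a _ => by positivity,
    ← ENNReal.ofReal_prod_of_nonneg fun a _ => by positivity,
    ← ENNReal.ofReal_mul (Finset.prod_nonneg fun a _ => by positivity),
    ← ENNReal.ofReal_mul (by positivity)]
  refine ENNReal.ofReal_le_ofReal ?_
  have hprod : r ^ k * ∏ l ∈ Finset.range k, |nodeFst p k - nodeFst p l|⁻¹ ≤
      (r ^ e) ^ k * ∏ l ∈ Finset.range k, |nodeFst p k - nodeFst p l| ^ (-e) := by
    have h1 : ∀ c : ℝ, ∀ F : ℕ → ℝ, c ^ k * ∏ l ∈ Finset.range k, F l =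
        ∏ l ∈ Finset.range k, c * F l := by
      intro c F
      rw [Finset.prod_mul_distrib, Finset.prod_const, Finset.card_range]
    rw [h1, h1]
    refine Finset.prod_le_prod (fun l _ => by positivity) fun l hl => ?_
    rw [Finset.mem_range] at hl
    set u := |nodeFst p k - nodeFst p l|
    have hu : r ≤ u := hp.2.1 k le_rfl l hl.le hl.ne'
    have hu0 : 0 < u := hr.trans_le hu
    rw [rpow_neg hu0.le, ← div_eq_mul_inv, ← div_eq_mul_inv, ← div_rpow hr.le hu0.le]
    exact self_le_rpow_of_le_one (by positivity) ((div_le_one hu0).2 hu) he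
  have hc : (0 : ℝ) ≤ 6 ^ Fintype.card (Idx k) * W ^ (∑ β : Idx k, (β.1.2 : ℕ)) *
      (r⁻¹) ^ (∑ β : Idx k, (β.1.2 : ℕ)) := by positivity
  rw [mul_assoc (6 ^ _ * _ * _)]
  refine mul_le_mul_of_nonneg_left ?_ hc
  rw [mul_left_comm ((r ^ e) ^ k)]
  refine mul_le_mul_of_nonneg_left hprod (Finset.prod_nonneg fun a _ => ?_)
  positivity

/-- The slice of the phase at first coordinate `s`, as a polynomial in the second coordinate. -/
def slicePoly (k : ℕ) (x : Idx k → ℝ) (s : ℝ) : Polynomial ℝ :=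
  ∑ β : Idx k, Polynomial.monomial (β.1.2 : ℕ) (x β * s ^ (β.1.1 : ℕ))

theorem natDegree_slicePoly_le (k : ℕ) (x : Idx k → ℝ) (s : ℝ) :
    (slicePoly k x s).natDegree ≤ k :=
  Polynomial.natDegree_sum_le_of_forall_le _ _ fun β _ =>
    (Polynomial.natDegree_monomial_le _).trans (by have := β.2; omega)

theorem eval_hasseDeriv_slicePoly (k : ℕ) (x : Idx k → ℝ) (j : ℕ) (s y : ℝ) :
    (Polynomial.hasseDeriv j (slicePoly k x s)).eval y = phaseDeriv k x j s y := by
  rw [slicePoly, map_sum, Polynomial.eval_finsetSum, phaseDeriv]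
  refine Finset.sum_congr rfl fun β _ => ?_
  rw [Polynomial.hasseDeriv_monomial, Polynomial.eval_monomial]
  ring

theorem eval_slicePoly (k : ℕ) (x : Idx k → ℝ) (s y : ℝ) :
    (slicePoly k x s).eval y = phaseDeriv k x 0 s y := by
  rw [← eval_hasseDeriv_slicePoly, Polynomial.hasseDeriv_zero']

theorem continuous_phaseDeriv (k : ℕ) (x : Idx k → ℝ) (j : ℕ) :
    Continuous fun q : ℝ × ℝ => phaseDeriv k x j q.1 q.2 := by
  unfold phaseDeriv
  fun_prop

/-- The part of the vertical slice at `s` on which the phase takes values in `[μ, μ + 1]`. -/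
def levelSlice (k : ℕ) (x : Idx k → ℝ) (μ s : ℝ) : Set ℝ :=
  {y ∈ Icc (0 : ℝ) 1 | phaseDeriv k x 0 s y ∈ Icc μ (μ + 1)}

theorem measurableSet_level (k : ℕ) (x : Idx k → ℝ) (μ : ℝ) :
    MeasurableSet {q : ℝ × ℝ | q.2 ∈ levelSlice k x μ q.1} :=
  ((isClosed_Icc.preimage continuous_snd).inter
    (isClosed_Icc.preimage (continuous_phaseDeriv k x 0))).measurableSet

theorem measurable_volume_levelSlice (k : ℕ) (x : Idx k → ℝ) (μ : ℝ) :
    Measurable fun s => volume (levelSlice k x μ s) :=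
  measurable_measure_prodMk_left (measurableSet_level k x μ)

theorem volume_levelSlice_le (k : ℕ) (x : Idx k → ℝ) (μ s : ℝ) :
    volume (levelSlice k x μ s) ≤ 1 :=
  (measure_mono fun _ hy => hy.1).trans (by simp : volume (Icc (0 : ℝ) 1) ≤ 1)

/-- Phases having, for some level, at least measure `v` of slices of measure at least `w`. -/
def sliceSet (k : ℕ) (w v : ℝ) : Set (Idx k → ℝ) :=
  {x | ∃ μ : ℝ, ENNReal.ofReal v ≤
    volume {t ∈ Icc (0 : ℝ) 1 | ENNReal.ofReal w ≤ volume (levelSlice k x μ t)}}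

/-- The measure of a level set of the phase is the integral of the measures of its slices. -/
theorem volume_level_eq (k : ℕ) (x : Idx k → ℝ) (μ : ℝ) :
    volume {ξ ∈ Icc (0 : Fin 2 → ℝ) 1 | μ ≤ Pphase k x ξ ∧ Pphase k x ξ ≤ μ + 1} =
      ∫⁻ t in Icc (0 : ℝ) 1, volume (levelSlice k x μ t) := by
  have hm : MeasurableSet {q : ℝ × ℝ | q.1 ∈ Icc (0 : ℝ) 1 ∧ q.2 ∈ levelSlice k x μ q.1} :=
    (measurable_fst measurableSet_Icc).inter (measurableSet_level k x μ)
  have hP : ∀ ξ, Pphase k x ξ = phaseDeriv k x 0 (ξ 0) (ξ 1) := by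
    intro ξ
    simp [Pphase, phaseDeriv, mul_assoc]
  have e : {ξ ∈ Icc (0 : Fin 2 → ℝ) 1 | μ ≤ Pphase k x ξ ∧ Pphase k x ξ ≤ μ + 1} =
      MeasurableEquiv.finTwoArrow ⁻¹'
        {q : ℝ × ℝ | q.1 ∈ Icc (0 : ℝ) 1 ∧ q.2 ∈ levelSlice k x μ q.1} := by
    ext ξ
    simp only [mem_ofPred_eq, mem_preimage, levelSlice, hP, mem_Icc, Pi.le_def, Fin.forall_fin_two,
      MeasurableEquiv.finTwoArrow_apply, Pi.zero_apply, Pi.one_apply]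
    tauto
  rw [e, (volume_preserving_finTwoArrow ℝ).measure_preimage hm.nullMeasurableSet,
    Measure.volume_eq_prod, Measure.prod_apply hm, ← lintegral_indicator measurableSet_Icc]
  refine lintegral_congr fun t => ?_
  by_cases ht : t ∈ Icc (0 : ℝ) 1
  · rw [indicator_of_mem ht]
    congr 1
    ext y
    simp [ht.1, ht.2]
  · rw [indicator_of_notMem ht, ← measure_empty (μ := (volume : Measure ℝ))]
    congr 1
    ext y
    simp only [mem_preimage, mem_ofPred_eq, mem_empty_iff_false, iff_false]
    exact fun h => ht h.1

/-- The block carrying the `i`-th node: the last two nodes go to the two extreme blocks. -/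
def nodeBlock (k i : ℕ) : ℕ := if i = k then k else if i + 1 = k then 0 else i + 1

/-- Controlled points of the phase over a set `B` of first coordinates. -/
def controlledSet (k : ℕ) (x : Idx k → ℝ) (μ W : ℝ) (B : Set ℝ) : Set (ℝ × ℝ) :=
  {q | q.1 ∈ B ∧ q.2 ∈ levelSlice k x μ q.1 ∧
    ∀ j, 1 ≤ j → |phaseDeriv k x j q.1 q.2| ≤ W ^ j}

theorem measurableSet_controlledSet (k : ℕ) (x : Idx k → ℝ) (μ W : ℝ) {B : Set ℝ}
    (hB : MeasurableSet B) : MeasurableSet (controlledSet k x μ W B) := by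
  have e : controlledSet k x μ W B = Prod.fst ⁻¹' B ∩ ({q | q.2 ∈ levelSlice k x μ q.1} ∩
      ⋂ j, ⋂ (_ : 1 ≤ j), {q | |phaseDeriv k x j q.1 q.2| ≤ W ^ j}) := by
    ext q
    simp [controlledSet]
  rw [e]
  exact (measurable_fst hB).inter ((measurableSet_level k x μ).inter
    (isClosed_iInter fun j => isClosed_iInter fun _ =>
      isClosed_le (continuous_phaseDeriv k x j).abs continuous_const).measurableSet)

/-- Points in suitably separated blocks form an admissible configuration. -/
theorem mem_goodNodes_of_blocks {k : ℕ} (hk : 2 ≤ k) {x : Idx k → ℝ} {μ W r : ℝ} (hr : 0 ≤ r)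
    {B : ℕ → Set ℝ} (hB01 : ∀ i, B i ⊆ Icc 0 1)
    (hsep : ∀ i j, i < j → j < k + 1 → ∀ s ∈ B i, ∀ t ∈ B j, s + r ≤ t)
    {p : Fin (k + 1) → ℝ × ℝ}
    (hp : ∀ i : Fin (k + 1), p i ∈ controlledSet k x μ W (B (nodeBlock k i))) :
    p ∈ goodNodes k r ∧ x ∈ nodeSet k (nodeFst p) (nodeSnd p) W 1 := by
  have hq : ∀ i ≤ k, (nodeFst p i, nodeSnd p i) ∈ controlledSet k x μ W (B (nodeBlock k i)) := by
    intro i hi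
    have := hp (Fin.ofNat (k + 1) i)
    rwa [Fin.val_ofNat, Nat.mod_eq_of_lt (by omega)] at this
  have hlt : ∀ i ≤ k, ∀ l ≤ k, nodeBlock k i < nodeBlock k l →
      nodeFst p i + r ≤ nodeFst p l := by
    intro i hi l hl h
    refine hsep _ _ h ?_ _ (hq i hi).1 _ (hq l hl).1
    unfold nodeBlock
    split_ifs <;> omega
  refine ⟨⟨fun i => ⟨hB01 _ (hp i).1, (hp i).2.1.1⟩, fun i hi l hl hil => ?_, fun i hi => ⟨?_, ?_⟩⟩,
    fun i hi j hj _ => ?_, fun i hi => ?_⟩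
  · have : nodeBlock k i < nodeBlock k l ∨ nodeBlock k l < nodeBlock k i := by
      unfold nodeBlock
      split_ifs <;> omega
    rcases this with h | h
    · rw [abs_sub_comm]
      exact le_trans (by linarith [hlt i hi l hl h]) (le_abs_self _)
    · exact le_trans (by linarith [hlt l hl i hi h]) (le_abs_self _)
  · by_cases h : i = k - 1
    · rw [h]
    · have : nodeBlock k (k - 1) < nodeBlock k i := by
        unfold nodeBlock
        split_ifs <;> omega
      linarith [hlt (k - 1) (by omega) i hi this]
  · by_cases h : i = k
    · rw [h]
    · have : nodeBlock k i < nodeBlock k k := by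
        unfold nodeBlock
        split_ifs <;> omega
      linarith [hlt i hi k le_rfl this]
  · rw [one_mul]
    exact (hq i hi).2.2 j hj
  · have h1 := (hq i hi).2.1.2
    have h2 := (hq 0 (by omega)).2.1.2
    rw [abs_le]
    constructor <;> linarith [h1.1, h1.2, h2.1, h2.2]

/-- A phase with many large slices is controlled at many configurations of nodes. -/
theorem exists_le_volume_nodes {k : ℕ} (hk : 2 ≤ k) : ∃ C : ℝ, 1 ≤ C ∧ ∀ w v : ℝ, 0 < w → 0 < v →
    ∀ x ∈ sliceSet k w v, ENNReal.ofReal (v / (2 * (k + 1 : ℕ)) * (w / 2)) ^ (k + 1) ≤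
      volume {p | p ∈ goodNodes k (v / (2 * (k + 1 : ℕ))) ∧
        x ∈ nodeSet k (nodeFst p) (nodeSnd p) (C / w) 1} := by
  obtain ⟨C, hC1, hC⟩ := exists_hasseDeriv_bound k (by omega)
  refine ⟨C, hC1, fun w v hw hv x ⟨μ, hx⟩ => ?_⟩
  set r : ℝ := v / (2 * (k + 1 : ℕ)) with hr
  have hr0 : 0 ≤ r := by positivity
  set T := {t ∈ Icc (0 : ℝ) 1 | ENNReal.ofReal w ≤ volume (levelSlice k x μ t)} with hT
  have hTm : MeasurableSet T := measurableSet_Icc.inter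
    (measurableSet_le measurable_const (measurable_volume_levelSlice k x μ))
  obtain ⟨B, hBT, hBm, hBv, hBsep⟩ := exists_separated_blocks hTm (fun t ht => ht.1) hv hx (k + 1)
  set Q : ℕ → Set (ℝ × ℝ) := fun i => controlledSet k x μ (C / w) (B (nodeBlock k i)) with hQ
  have hQv : ∀ i ≤ k, ENNReal.ofReal (r * (w / 2)) ≤ volume (Q i) := by
    intro i hi
    have hb : nodeBlock k i < k + 1 := by
      unfold nodeBlock
      split_ifs <;> omega
    rw [Measure.volume_eq_prod, Measure.prod_apply (measurableSet_controlledSet k x μ _ (hBm _)),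
      ENNReal.ofReal_mul hr0, mul_comm]
    calc ENNReal.ofReal (w / 2) * ENNReal.ofReal r
        ≤ ENNReal.ofReal (w / 2) * volume (B (nodeBlock k i)) := by gcongr; exact hBv _ hb
      _ = ∫⁻ _t in B (nodeBlock k i), ENNReal.ofReal (w / 2) := (setLIntegral_const _ _).symm
      _ ≤ ∫⁻ t in B (nodeBlock k i), volume (Prod.mk t ⁻¹' Q i) := by
          refine setLIntegral_mono' (hBm _) fun t ht => ?_
          refine (hC (slicePoly k x t) (natDegree_slicePoly_le k x t) μ w hw
            (levelSlice k x μ t) (fun y hy => ?_) (hBT _ ht).2).trans (measure_mono fun y hy => ?_)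
          · rw [eval_slicePoly]
            exact hy.2
          · refine ⟨ht, hy.1, fun j hj => ?_⟩
            rw [← eval_hasseDeriv_slicePoly]
            exact hy.2 j hj
      _ ≤ _ := setLIntegral_le_lintegral _ _
  calc ENNReal.ofReal (r * (w / 2)) ^ (k + 1)
      = ∏ _i : Fin (k + 1), ENNReal.ofReal (r * (w / 2)) := by simp
    _ ≤ ∏ i : Fin (k + 1), volume (Q i) := Finset.prod_le_prod' fun i _ => hQv i (by omega)
    _ = volume (univ.pi fun i : Fin (k + 1) => Q i) := (volume_pi_pi _).symm
    _ ≤ _ := measure_mono fun p hp => mem_goodNodes_of_blocks hk hr0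
        (fun i t ht => (hBT i ht).1) hBsep fun i => hp i (mem_univ i)

/-- Chebyshev's inequality for the number of configurations controlling a phase. -/
theorem mul_volume_le_lintegral_goodNodes {k : ℕ} (r W : ℝ) (c : ℝ≥0∞) {L : Set (Idx k → ℝ)}
    (hL : ∀ x ∈ L, c ≤ volume {p | p ∈ goodNodes k r ∧
      x ∈ nodeSet k (nodeFst p) (nodeSnd p) W 1}) :
    c * volume L ≤ ∫⁻ p in goodNodes k r, volume (nodeSet k (nodeFst p) (nodeSnd p) W 1) := by
  set E : Set ((Idx k → ℝ) × (Fin (k + 1) → ℝ × ℝ)) :=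
    {q | q.2 ∈ goodNodes k r ∧ q.1 ∈ nodeSet k (nodeFst q.2) (nodeSnd q.2) W 1} with hE
  have hEm : MeasurableSet E := by
    refine (measurable_snd (measurableSet_goodNodes k r)).inter (IsClosed.measurableSet ?_)
    exact isClosed_mem_nodeSet
      (x := fun q : (Idx k → ℝ) × (Fin (k + 1) → ℝ × ℝ) => q.1)
      (t := fun q => nodeFst q.2) (y := fun q => nodeSnd q.2) continuous_fst
      (fun i => (continuous_nodeFst i).comp continuous_snd)
      (fun i => (continuous_nodeSnd i).comp continuous_snd) W 1
  calc c * volume L ≤ c * volume {x | c ≤ volume (Prod.mk x ⁻¹' E)} := by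
        gcongr
        exact fun x hx => hL x hx
    _ ≤ ∫⁻ x, volume (Prod.mk x ⁻¹' E) :=
        mul_meas_ge_le_lintegral (measurable_measure_prodMk_left hEm) c
    _ = ∫⁻ p, volume ((fun x => (x, p)) ⁻¹' E) := by
        rw [← Measure.prod_apply hEm, Measure.prod_apply_symm hEm]
    _ = _ := by
        rw [← lintegral_indicator (measurableSet_goodNodes k r)]
        refine lintegral_congr fun p => ?_
        by_cases hp : p ∈ goodNodes k r
        · rw [indicator_of_mem hp]
          congr 1
          ext x
          simp [hE, hp]
        · rw [indicator_of_notMem hp, ← measure_empty (μ := (volume : Measure (Idx k → ℝ)))]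
          congr 1
          ext x
          simp [hE, hp]

theorem mem_sliceSet_of_mem_Lset {ε : ℝ} (hε : 0 < ε) (k : ℕ) : ∃ c : ℝ, 0 < c ∧
    ∀ δ : ℝ, 0 < δ → ∀ m : ℕ, (1 / 2 : ℝ) ^ m ≤ δ / 2 → δ * 2 ^ m ≤ 4 →
      Lset k δ ⊆ ⋃ n ∈ Finset.range (m + 1),
        sliceSet k ((1 / 2) ^ n) (c * (δ * 2 ^ n) ^ (1 + ε)) := by
  obtain ⟨c, hc, h⟩ := exists_dyadic_level hε
  refine ⟨c, hc, fun δ hδ m hm1 hm2 x hx => ?_⟩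
  obtain ⟨μ, hμ⟩ := lt_iSup_iff.1 (show ENNReal.ofReal δ < _ from hx)
  rw [volume_level_eq] at hμ
  obtain ⟨n, hn, hnv⟩ := h _ (measurable_volume_levelSlice k x μ) (volume_levelSlice_le k x μ)
    δ hδ hμ m hm1 hm2
  exact mem_iUnion₂.2 ⟨n, Finset.mem_range.2 (by omega), μ, hnv⟩

theorem separation_rpow_identity {c d : ℝ} (hc : 0 < c) (hd : 0 < d) (S : ℕ) {k : ℕ} (hk : 1 ≤ k)
    {r : ℝ} (hr : r = c * d ^ (1 + 1 / (4 * S + 6) : ℝ)) :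
    (r⁻¹) ^ S * (r ^ (1 - 1 / (2 * k) : ℝ)) ^ k =
      c ^ (-(S + 3 / 2) : ℝ) * d ^ (1 / 4 : ℝ) * (d ^ (S + 2))⁻¹ * r ^ (k + 1) := by
  have hk0 : (0 : ℝ) < k := by exact_mod_cast hk
  have hr0 : 0 < r := by rw [hr]; positivity
  have h1 : (r⁻¹) ^ S * (r ^ (1 - 1 / (2 * k) : ℝ)) ^ k =
      r ^ (-(S + 3 / 2) : ℝ) * r ^ (k + 1) := by
    rw [← rpow_natCast r (k + 1), ← rpow_natCast (r⁻¹), inv_rpow hr0.le, ← rpow_neg hr0.le,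
      ← rpow_mul_natCast hr0.le, ← rpow_add hr0, ← rpow_add hr0]
    congr 1
    push_cast
    field_simp
    ring
  have h2 : r ^ (-(S + 3 / 2) : ℝ) =
      c ^ (-(S + 3 / 2) : ℝ) * d ^ (1 / 4 : ℝ) * (d ^ (S + 2))⁻¹ := by
    rw [hr, mul_rpow hc.le (by positivity), ← rpow_mul hd.le, mul_assoc, ← rpow_natCast d (S + 2),
      ← rpow_neg hd.le, ← rpow_add hd]
    congr 2
    push_cast
    field_simp
    ring
  rw [h1, h2]

/-- The volume of the set of phases with many large slices, at one scale. -/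
theorem volume_sliceSet_le {k : ℕ} (hk : 2 ≤ k) {S : ℕ} (hS : S = ∑ β : Idx k, (β.1.2 : ℕ)) :
    ∃ C : ℝ, 1 ≤ C ∧ ∀ c : ℝ, 0 < c → ∃ K : ℝ, 0 ≤ K ∧ ∀ d w : ℝ, 0 < d → 0 < w →
      volume (sliceSet k w (c * d ^ (1 + 1 / (4 * S + 6) : ℝ))) ≤
        ENNReal.ofReal (K * Real.log (1 + C / w) ^ (k - 1) * ((d * w) ^ (S + 2))⁻¹ *
          d ^ (1 / 4 : ℝ)) := by
  obtain ⟨C, hC1, hC⟩ := exists_le_volume_nodes hk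
  have hC0 : 0 < C := by linarith
  have hk0 : (0 : ℝ) < k := by exact_mod_cast (by omega : 0 < k)
  set e : ℝ := 1 - 1 / (2 * k) with he
  have he1 : e < 1 := by
    have : 0 < 1 / (2 * (k : ℝ)) := by positivity
    linarith
  set A : ℝ := (∫⁻ u, rieszKernel e u).toReal with hA
  have hAe : ∫⁻ u, rieszKernel e u = ENNReal.ofReal A :=
    (ENNReal.ofReal_toReal (lintegral_abs_rpow_lt_top he1).ne).symm
  have hA0 : 0 ≤ A := ENNReal.toReal_nonneg
  refine ⟨C, hC1, fun c hc => ?_⟩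
  set c' : ℝ := c / (2 * (k + 1 : ℕ)) with hc'
  have hc'0 : 0 < c' := by positivity
  set Z : ℝ := 6 ^ Fintype.card (Idx k) with hZ
  have hZ0 : 0 < Z := by positivity
  refine ⟨Z * A ^ k * 2 ^ (k - 1) * 2 ^ (k + 1) * (C ^ S / C ^ (k - 1)) *
    c' ^ (-(S + 3 / 2) : ℝ), by positivity, fun d w hd hw => ?_⟩
  set v : ℝ := c * d ^ (1 + 1 / (4 * S + 6) : ℝ) with hv
  have hv0 : 0 < v := by positivity
  set r : ℝ := v / (2 * (k + 1 : ℕ)) with hr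
  have hr0 : 0 < r := by positivity
  have hrc : r = c' * d ^ (1 + 1 / (4 * S + 6) : ℝ) := by
    rw [hr, hv, hc']
    ring
  have hW : 0 < C / w := by positivity
  have hL : 0 ≤ Real.log (1 + C / w) := Real.log_nonneg (by linarith)
  have key := (mul_volume_le_lintegral_goodNodes r (C / w) _ (hC w v hw hv0)).trans
    (lintegral_volume_nodeSet_le hk he1.le hr0 hW)
  rw [hAe, ← ENNReal.ofReal_pow (by positivity), ← ENNReal.ofReal_pow (by positivity),
    ← ENNReal.ofReal_pow hA0, ← ENNReal.ofReal_mul (by positivity),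
    ← ENNReal.ofReal_mul (by positivity), ← hS, ← hZ] at key
  have hpos : 0 < (r * (w / 2)) ^ (k + 1) := by positivity
  rw [← ENNReal.mul_le_mul_iff_right (ENNReal.ofReal_pos.2 hpos).ne' ENNReal.ofReal_ne_top,
    ← ENNReal.ofReal_mul hpos.le]
  refine key.trans (ENNReal.ofReal_le_ofReal (le_of_eq ?_))
  have hid := separation_rpow_identity hc'0 hd S (by omega : 1 ≤ k) hrc
  rw [mul_assoc (Z * (C / w) ^ S), hid]
  obtain ⟨n, rfl⟩ : ∃ n, k = n + 1 := ⟨k - 1, by omega⟩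
  rw [Nat.add_sub_cancel]
  generalize c' ^ (-(S + 3 / 2) : ℝ) = c''
  generalize d ^ (1 / 4 : ℝ) = d'
  generalize Real.log (1 + C / w) = L
  simp only [mul_pow, div_pow]
  field_simp
  ring

theorem log_one_add_natCast_div_le {δ : ℝ} (hδ : 0 < δ) (M : ℕ) :
    Real.log (1 + M / δ) ≤ M * Real.log (1 + 1 / δ) := by
  have h0 : 0 < 1 / δ := by positivity
  rw [← Real.log_pow]
  refine Real.log_le_log (by positivity) ?_
  have := one_add_mul_le_pow (by linarith : -2 ≤ 1 / δ) M
  rwa [mul_one_div] at this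

/-- Estimate (3.7) of the paper: for every `k ≥ 2` there is `C_k < ∞` with
`|L_δ| ≤ C_k (log₊ δ)^{k−1} δ^{−q_k}` for every `δ ∈ (0,1]`,
where `log₊ δ = log(1 + 1/δ)` and `q_k = k(k+1)(k+2)/6 + 2`. -/
theorem Lset_estimate (k : ℕ) (hk : 2 ≤ k) :
    ∃ C : ℝ, 0 ≤ C ∧
      ∀ δ : ℝ, 0 < δ → δ ≤ 1 →
        volume (Lset k δ) ≤
          ENNReal.ofReal (C * Real.log (1 + 1 / δ) ^ (k - 1) *
            δ ^ (-((k : ℝ) * (k + 1) * (k + 2) / 6 + 2))) := by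
  set S : ℕ := ∑ β : Idx k, (β.1.2 : ℕ) with hS
  have hq : ((k : ℝ) * (k + 1) * (k + 2) / 6 + 2) = ((S + 2 : ℕ) : ℝ) := by
    have h : (6 : ℝ) * S = k * (k + 1) * (k + 2) := by exact_mod_cast Idx.sum_snd k
    push_cast
    linarith
  obtain ⟨C, hC1, hC⟩ := volume_sliceSet_le hk hS
  obtain ⟨c, hc, hcov⟩ := mem_sliceSet_of_mem_Lset
    (by positivity : (0 : ℝ) < 1 / (4 * S + 6)) k
  obtain ⟨K, hK0, hK⟩ := hC c hc
  obtain ⟨M, hM⟩ := exists_nat_ge (4 * C)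
  have hq1 : (1 / 2 : ℝ) ^ (1 / 4 : ℝ) < 1 :=
    Real.rpow_lt_one (by norm_num) (by norm_num) (by norm_num)
  set G : ℝ := 4 ^ (1 / 4 : ℝ) / (1 - (1 / 2 : ℝ) ^ (1 / 4 : ℝ)) with hG
  have hG0 : 0 ≤ G := div_nonneg (by positivity) (by linarith)
  refine ⟨K * M ^ (k - 1) * G, by positivity, fun δ hδ hδ1 => ?_⟩
  rw [hq, rpow_neg hδ.le, rpow_natCast]
  obtain ⟨n₀, hn1, hn2⟩ := exists_nat_pow_near_of_lt_one (by linarith : 0 < δ / 2)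
    (by linarith : δ / 2 ≤ 1) (by norm_num : (0 : ℝ) < 1 / 2) (by norm_num)
  have hm2 : δ * 2 ^ (n₀ + 1) ≤ 4 := by
    have h : δ / 2 * 2 ^ n₀ ≤ 1 := by
      have := mul_le_mul_of_nonneg_right hn2 (by positivity : (0 : ℝ) ≤ 2 ^ n₀)
      rwa [← mul_pow, one_div, inv_mul_cancel₀ two_ne_zero, one_pow] at this
    rw [pow_succ]
    linarith
  set L : ℝ := Real.log (1 + 1 / δ) with hL
  have hL0 : 0 ≤ L := Real.log_nonneg (by
    have : 0 < 1 / δ := by positivity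
    linarith)
  have hlevel : ∀ n ∈ Finset.range (n₀ + 1 + 1),
      volume (sliceSet k ((1 / 2) ^ n) (c * (δ * 2 ^ n) ^ (1 + 1 / (4 * S + 6) : ℝ))) ≤
        ENNReal.ofReal (K * (M * L) ^ (k - 1) * (δ ^ (S + 2))⁻¹ *
          (δ * 2 ^ n) ^ (1 / 4 : ℝ)) := by
    intro n hn
    rw [Finset.mem_range] at hn
    refine (hK (δ * 2 ^ n) ((1 / 2) ^ n) (by positivity) (by positivity)).trans
      (ENNReal.ofReal_le_ofReal ?_)
    rw [mul_assoc δ, ← mul_pow, mul_one_div_cancel two_ne_zero, one_pow, mul_one]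
    have hCw : C / (1 / 2) ^ n ≤ M / δ := by
      rw [one_div, inv_pow, div_inv_eq_mul, le_div_iff₀ hδ]
      have h : δ * 2 ^ n ≤ 4 :=
        le_trans (mul_le_mul_of_nonneg_left (pow_le_pow_right₀ one_le_two (by omega)) hδ.le) hm2
      nlinarith
    have hCw0 : 0 < C / (1 / 2) ^ n := by positivity
    have hlog : Real.log (1 + C / (1 / 2) ^ n) ≤ M * L :=
      (Real.log_le_log (by linarith) (by linarith)).trans (log_one_add_natCast_div_le hδ M)
    have hlog0 : 0 ≤ Real.log (1 + C / (1 / 2) ^ n) := Real.log_nonneg (by linarith)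
    gcongr
  calc volume (Lset k δ) ≤ ∑ n ∈ Finset.range (n₀ + 1 + 1), volume (sliceSet k ((1 / 2) ^ n)
        (c * (δ * 2 ^ n) ^ (1 + 1 / (4 * S + 6) : ℝ))) :=
        (measure_mono (hcov δ hδ (n₀ + 1) hn1.le hm2)).trans (measure_biUnion_finset_le _ _)
    _ ≤ ∑ n ∈ Finset.range (n₀ + 1 + 1), ENNReal.ofReal (K * (M * L) ^ (k - 1) *
        (δ ^ (S + 2))⁻¹ * (δ * 2 ^ n) ^ (1 / 4 : ℝ)) := Finset.sum_le_sum hlevel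
    _ = ENNReal.ofReal (K * (M * L) ^ (k - 1) * (δ ^ (S + 2))⁻¹ *
        ∑ n ∈ Finset.range (n₀ + 1 + 1), (δ * 2 ^ n) ^ (1 / 4 : ℝ)) := by
        rw [← ENNReal.ofReal_sum_of_nonneg fun n _ => by positivity, Finset.mul_sum]
    _ ≤ ENNReal.ofReal (K * (M * L) ^ (k - 1) * (δ ^ (S + 2))⁻¹ * G) := by
        gcongr
        exact sum_dyadic_rpow_le hδ (by norm_num) hm2
    _ = _ := by
        rw [mul_pow]
        ring_nf
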